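/- arXiv:2505.03959 — 2 statements merged into one kernel-verified Lean document; each statement's English description precedes it below -/
import Mathlib

section
/- Let F be a 3-CNF formula with m clauses in which every clause contains three distinct variables, and let G_F be the graph of the construction with bipartition (A, B), where A consists of the cycle vertices with even index and B consists of the cycle vertices with odd index together with all clause vertices. Then G_F can be transformed into a disjoint union of bicliques by a sequence of at most 8m edge editions and vertex splittings if and only if F is satisfiable; moreover, the same equivalence holds when vertex splittings are allowed only on vertices of B (and their copies). -/
/- Common framework: bipartite graphs on vertex set `ℕ` with side labels,
   edge editions, vertex splittings, and the bicluster-editing numbers. -/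

namespace BCE

/-- A graph on a finite subset of `ℕ` equipped with a labelling of its
vertices into two sides `A` and `B`. -/
structure BGraph where
  A : Set ℕ
  B : Set ℕ
  finA : A.Finite
  finB : B.Finite
  Adj : ℕ → ℕ → Prop
  symm : ∀ u v, Adj u v → Adj v u

/-- The vertex set of a graph. -/
def verts (G : BGraph) : Set ℕ := G.A ∪ G.B

/-- The open neighbourhood of a vertex. -/
def nbhd (G : BGraph) (v : ℕ) : Set ℕ := {u | G.Adj v u}

/-- `G = (A, B, E)` is bipartite: the sides are disjoint and every edge joins
a vertex of `A` with a vertex of `B`. -/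
def Bipartite (G : BGraph) : Prop :=
  Disjoint G.A G.B ∧
    ∀ u v, G.Adj u v → (u ∈ G.A ∧ v ∈ G.B) ∨ (u ∈ G.B ∧ v ∈ G.A)

/-- A (bipartite) graph is a disjoint union of bicliques iff whenever
`a-b-c-d` is a walk, `a` and `d` are adjacent (equivalently, every connected
component is a complete bipartite graph). -/
def IsBicliqueUnion (G : BGraph) : Prop :=
  ∀ a b c d, G.Adj a b → G.Adj b c → G.Adj c d → G.Adj a d

/-- The editing operations: deletion of an edge, addition of an edge, and
splitting of a vertex `v` into `v` and a fresh vertex `v'` whose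
neighbourhoods `N1`, `N2` cover the neighbourhood of `v`. -/
inductive Op where
  | del : ℕ → ℕ → Op
  | add : ℕ → ℕ → Op
  | split : ℕ → ℕ → Set ℕ → Set ℕ → Op

/-- `op` is a vertex splitting. -/
def IsSplitOp : Op → Prop
  | Op.split _ _ _ _ => True
  | _ => False

/-- `OpStep sA sB op G G'` : performing the single operation `op` on `G`
yields `G'`; vertex splittings are allowed on side `A` (resp. `B`) only if
`sA` (resp. `sB`) is `true`.  A copy created by a splitting is put on the
same side as the split vertex. -/
inductive OpStep (sA sB : Bool) : Op → BGraph → BGraph → Prop where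
  | del {G G' : BGraph} {u v : ℕ}
      (h : G.Adj u v) (hA : G'.A = G.A) (hB : G'.B = G.B)
      (hadj : ∀ x y, G'.Adj x y ↔
        (G.Adj x y ∧ ¬((x = u ∧ y = v) ∨ (x = v ∧ y = u)))) :
      OpStep sA sB (Op.del u v) G G'
  | add {G G' : BGraph} {u v : ℕ}
      (hu : u ∈ G.A) (hv : v ∈ G.B) (h : ¬ G.Adj u v)
      (hA : G'.A = G.A) (hB : G'.B = G.B)
      (hadj : ∀ x y, G'.Adj x y ↔
        (G.Adj x y ∨ (x = u ∧ y = v) ∨ (x = v ∧ y = u))) :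
      OpStep sA sB (Op.add u v) G G'
  | split {G G' : BGraph} {v v' : ℕ} {N1 N2 : Set ℕ}
      (hside : (v ∈ G.A ∧ sA = true) ∨ (v ∈ G.B ∧ sB = true))
      (hfresh : v' ∉ verts G)
      (hcover : N1 ∪ N2 = nbhd G v)
      (hA : v ∈ G.A → G'.A = insert v' G.A ∧ G'.B = G.B)
      (hB : v ∈ G.B → G'.A = G.A ∧ G'.B = insert v' G.B)
      (hadj : ∀ x y, G'.Adj x y ↔
        ((G.Adj x y ∧ x ≠ v ∧ y ≠ v) ∨ (x = v ∧ y ∈ N1) ∨ (y = v ∧ x ∈ N1) ∨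
          (x = v' ∧ y ∈ N2) ∨ (y = v' ∧ x ∈ N2))) :
      OpStep sA sB (Op.split v v' N1 N2) G G'

/-- `ApplySeq sA sB L G G'` : applying the sequence of operations `L`
to `G` yields `G'`. -/
def ApplySeq (sA sB : Bool) : List Op → BGraph → BGraph → Prop
  | [], G, G' => G' = G
  | op :: L, G, G'' => ∃ G', OpStep sA sB op G G' ∧ ApplySeq sA sB L G' G''

/-- The sequence `L` transforms `G` into a disjoint union of bicliques. -/
def Solves (sA sB : Bool) (L : List Op) (G : BGraph) : Prop :=
  ∃ G', ApplySeq sA sB L G G' ∧ IsBicliqueUnion G'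

/-- `bcevs G` : the minimum length of a sequence of edge editions and vertex
splittings transforming `G` into a disjoint union of bicliques. -/
noncomputable def bcevs (G : BGraph) : ℕ :=
  sInf {n | ∃ L, L.length = n ∧ Solves true true L G}

/-- `bceovs G` (that is, `bceovs(G, A)`) : the minimum length of such a
sequence in which vertex splittings are applied only to vertices of the side
`A` (and their copies, which are also on side `A`). -/
noncomputable def bceovs (G : BGraph) : ℕ :=
  sInf {n | ∃ L, L.length = n ∧ Solves true false L G}

/-- The subgraph of `G` induced by `S`. -/
def induce (G : BGraph) (S : Set ℕ) : BGraph where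
  A := G.A ∩ S
  B := G.B ∩ S
  finA := G.finA.subset Set.inter_subset_left
  finB := G.finB.subset Set.inter_subset_left
  Adj := fun u v => G.Adj u v ∧ u ∈ S ∧ v ∈ S
  symm := fun u v h => ⟨G.symm u v h.1, h.2.2, h.2.1⟩

/-- `G` is a tree (as an abstract graph on its vertex set). -/
def IsTreeB (G : BGraph) : Prop :=
  (SimpleGraph.induce (verts G) (SimpleGraph.fromRel G.Adj)).IsTree

/-- `G` is connected. -/
def ConnectedB (G : BGraph) : Prop :=
  (SimpleGraph.induce (verts G) (SimpleGraph.fromRel G.Adj)).Connected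

/-- The set `S` induces a biclique in `G`: every vertex of `S` on side `A` is
adjacent to every vertex of `S` on side `B`. -/
def IsBicliqueOn (G : BGraph) (S : Set ℕ) : Prop :=
  ∀ u ∈ S ∩ G.A, ∀ v ∈ S ∩ G.B, G.Adj u v

/-- The set `S` induces a star in `G`: some centre `c ∈ S` is adjacent to all
other vertices of `S`, and every edge inside `S` uses the centre. -/
def IsStarOn (G : BGraph) (S : Set ℕ) : Prop :=
  ∃ c ∈ S, (∀ v ∈ S, v ≠ c → G.Adj c v) ∧
    (∀ u ∈ S, ∀ v ∈ S, G.Adj u v → u = c ∨ v = c)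

/-- An `A`-partitioning cover of `G`: a collection of subsets of `A ∪ B`
covering all vertices whose traces on `A` form a partition of `A` (every
vertex of `A` lies in a unique member of the collection). -/
def IsAPartCover (G : BGraph) (C : Set (Set ℕ)) : Prop :=
  (∀ X ∈ C, X ⊆ verts G) ∧
  (∀ v ∈ verts G, ∃ X ∈ C, v ∈ X) ∧
  (∀ a ∈ G.A, ∃! X, X ∈ C ∧ a ∈ X)

/-- The cost of an `A`-partitioning cover: each `a ∈ A` lying in the unique
set `X ∈ C` costs `|(B ∩ X) \ N(a)| + |N(a) \ X|`; each `b ∈ B` lying in `j`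
members of `C` costs `j - 1`. -/
noncomputable def coverCost (G : BGraph) (C : Set (Set ℕ)) : ℕ :=
  (∑ᶠ a ∈ G.A, ∑ᶠ X ∈ {X ∈ C | a ∈ X},
      (((G.B ∩ X) \ nbhd G a).ncard + ((nbhd G a) \ X).ncard)) +
  ∑ᶠ b ∈ G.B, ({X ∈ C | b ∈ X}.ncard - 1)

/-- The twin class of a vertex: all vertices of `G` with the same open
neighbourhood. -/
def twinClass (G : BGraph) (v : ℕ) : Set ℕ :=
  {u ∈ verts G | nbhd G u = nbhd G v}

/-- The twin classes of `G`. -/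
def twinClasses (G : BGraph) : Set (Set ℕ) :=
  {T | ∃ v ∈ verts G, T = twinClass G v}

/-- A cover is twin-adapted if every member contains each twin class either
entirely or not at all. -/
def TwinAdapted (G : BGraph) (C : Set (Set ℕ)) : Prop :=
  ∀ T ∈ twinClasses G, ∀ X ∈ C, T ∩ X = ∅ ∨ T ⊆ X

/-- `G` is a cycle with consecutive vertices `p 0, p 1, …, p (m-1)`
(indices modulo `m`), the vertices of even index forming side `A`. -/
def IsCycleWith (G : BGraph) (p : ℕ → ℕ) (m : ℕ) : Prop :=
  (∀ i j, i < m → j < m → p i = p j → i = j) ∧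
  G.A = p '' {i | i < m ∧ i % 2 = 0} ∧
  G.B = p '' {i | i < m ∧ i % 2 = 1} ∧
  (∀ x y, G.Adj x y ↔ ∃ i < m,
    (x = p i ∧ y = p ((i + 1) % m)) ∨ (y = p i ∧ x = p ((i + 1) % m)))

/-- `G` is a path with `l` edges and consecutive vertices `p 0, …, p l`,
the vertices of even index forming side `A`. -/
def IsPathWith (G : BGraph) (p : ℕ → ℕ) (l : ℕ) : Prop :=
  (∀ i j, i ≤ l → j ≤ l → p i = p j → i = j) ∧
  G.A = p '' {i | i ≤ l ∧ i % 2 = 0} ∧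
  G.B = p '' {i | i ≤ l ∧ i % 2 = 1} ∧
  (∀ x y, G.Adj x y ↔ ∃ i < l,
    (x = p i ∧ y = p (i + 1)) ∨ (y = p i ∧ x = p (i + 1)))

end BCE

namespace BCE

/-- A 3-CNF formula with `m` clauses, each clause `c < m` consisting of three
literals `lit c 0, lit c 1, lit c 2` (a literal is a variable together with a
polarity), the three variables of a clause being pairwise distinct. -/
structure CNF3 where
  m : ℕ
  lit : ℕ → Fin 3 → ℕ × Bool
  distinct : ∀ c, c < m → ∀ i j : Fin 3, (lit c i).1 = (lit c j).1 → i = j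

/-- The variable `v` occurs in clause `c`. -/
def OccIn (F : CNF3) (v c : ℕ) : Prop := ∃ i : Fin 3, (F.lit c i).1 = v

/-- The variable `v` occurs positively in clause `c`. -/
def PosIn (F : CNF3) (v c : ℕ) : Prop := ∃ i : Fin 3, F.lit c i = (v, true)

open Classical in
/-- `d(v)`: the number of clauses in which the variable `v` occurs. -/
noncomputable def occCount (F : CNF3) (v : ℕ) : ℕ :=
  ((Finset.range F.m).filter (fun c => OccIn F v c)).card

open Classical in
/-- The (0-based) position of clause `c` in the list of clauses in which `v`
occurs (ordered by clause index). -/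
noncomputable def occIndex (F : CNF3) (v c : ℕ) : ℕ :=
  ((Finset.range c).filter (fun c' => OccIn F v c')).card

open Classical in
/-- The (1-based) index on the cycle of `v` of the vertex `v_c` attached to
clause `c`: `6(j-1)+1` for a positive occurrence and `6(j-1)+3` for a
negative one, `j` being the 1-based occurrence index. -/
noncomputable def attachIdx (F : CNF3) (v c : ℕ) : ℕ :=
  if PosIn F v c then 6 * occIndex F v c + 1 else 6 * occIndex F v c + 3

/-- Encoding into `ℕ` of the cycle vertex `v_i` (1-based index `i`). -/
def cycVert (v i : ℕ) : ℕ := 2 * Nat.pair v i + 1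

/-- Encoding into `ℕ` of the clause vertex of clause `c`. -/
def clVert (c : ℕ) : ℕ := 2 * c

/-- The vertex set of the construction `G_F`: one vertex per clause, and the
cycle vertices `v_1, …, v_{6 d(v)}` for every variable `v`. -/
def VsetF (F : CNF3) : Set ℕ :=
  {x | ∃ c < F.m, x = clVert c} ∪
  {x | ∃ v i, 1 ≤ i ∧ i ≤ 6 * occCount F v ∧ x = cycVert v i}

/-- The side `A` of `G_F`: the cycle vertices of even index. -/
def AsetF (F : CNF3) : Set ℕ :=
  {x | ∃ v i, 1 ≤ i ∧ i ≤ 6 * occCount F v ∧ i % 2 = 0 ∧ x = cycVert v i}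

/-- The side `B` of `G_F`: the cycle vertices of odd index together with the
clause vertices. -/
def BsetF (F : CNF3) : Set ℕ :=
  {x | ∃ c < F.m, x = clVert c} ∪
  {x | ∃ v i, 1 ≤ i ∧ i ≤ 6 * occCount F v ∧ i % 2 = 1 ∧ x = cycVert v i}

/-- Oriented edges of `G_F`: consecutive cycle edges (cyclically), and the
edge from each clause vertex `c` to `v_c` for every variable `v` of `c`. -/
def AdjF0 (F : CNF3) (x y : ℕ) : Prop :=
  (∃ v i, 1 ≤ i ∧ i ≤ 6 * occCount F v ∧
    x = cycVert v i ∧ y = cycVert v (i % (6 * occCount F v) + 1)) ∨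
  (∃ c < F.m, ∃ v, OccIn F v c ∧ x = clVert c ∧ y = cycVert v (attachIdx F v c))

/-- The adjacency relation of the construction `G_F`. -/
def AdjF (F : CNF3) (x y : ℕ) : Prop := AdjF0 F x y ∨ AdjF0 F y x

/-- `G` is (an encoded copy of) the graph `G_F` of the construction, with the
bipartition `(A, B)` where `A` consists of the cycle vertices with even index
and `B` of the cycle vertices with odd index together with the clause
vertices. -/
def IsGF (F : CNF3) (G : BGraph) : Prop :=
  G.A = AsetF F ∧ G.B = BsetF F ∧ ∀ x y, G.Adj x y ↔ AdjF F x y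

/-- `F` is satisfiable. -/
def Satisfiable (F : CNF3) : Prop :=
  ∃ σ : ℕ → Bool, ∀ c < F.m, ∃ i : Fin 3, σ (F.lit c i).1 = (F.lit c i).2

open Classical in
/-- The number of clauses of `F` satisfied by the assignment `σ`. -/
noncomputable def satCount (F : CNF3) (σ : ℕ → Bool) : ℕ :=
  ((Finset.range F.m).filter
    (fun c => ∃ i : Fin 3, σ (F.lit c i).1 = (F.lit c i).2)).card

/-- `OPT(F)`: the maximum number of clauses of `F` simultaneously satisfiable
by a truth assignment. -/
noncomputable def maxSat (F : CNF3) : ℕ :=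
  sSup {t | ∃ σ : ℕ → Bool, t = satCount F σ}

open Classical in
/-- The number of clauses in which `v` occurs positively. -/
noncomputable def posCount (F : CNF3) (v : ℕ) : ℕ :=
  ((Finset.range F.m).filter (fun c => PosIn F v c)).card

/-- Whenever a variable occurs exactly twice positively and twice negatively,
its occurrence list alternates: positive occurrences are exactly those with
even (0-based) occurrence index. -/
def Alternating (F : CNF3) : Prop :=
  ∀ v, posCount F v = 2 → occCount F v = 4 →
    ∀ c < F.m, OccIn F v c → (PosIn F v c ↔ occIndex F v c % 2 = 0)

end BCE

namespace BCE

/-!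
Call the recorded origins of vertices, created copies, deleted edges and added pairs the trace of a
sequence of operations. If `a b c d` is a path of `G_F` with `a` and `d` not adjacent, then a
disjoint union of bicliques can only be reached by spending an operation on one of its three edges,
on one of its inner vertices or on the pair of its ends. On a cycle of length `6 * d(v)` every such
operation affects at most three of the `6 * d(v)` paths of length three, so that the cycle costs at
least `2 * d(v)`, with one more operation for every attachment vertex that has a copy detached from
the cycle. A clause costs at least `2`, less `1` for each of its attachment vertices with a detached
copy except the first. Summing up, the total cost is at least `8 * m`; if it is exactly that, then
there are no detached copies, every cycle loses just every third edge, their residue class being the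
truth value of the variable, and some edge kept at each clause vertex forces the residue class that
makes its literal true. Conversely, cutting the cycles and the clauses in this way according to a
satisfying assignment leaves a disjoint union of stars.
-/

/-! ### Counting -/

section Counting

theorem sum_card_filter_le {α ι : Type*} (X : Finset α) (T : Finset ι) (P : ι → α → Prop)
    [∀ i, DecidablePred (P i)]
    (hP : ∀ x ∈ X, ∀ i ∈ T, ∀ j ∈ T, P i x → P j x → i = j) :
    ∑ i ∈ T, (X.filter (P i)).card ≤ X.card := by
  classical
  rw [← Finset.card_biUnion]
  · exact Finset.card_le_card (Finset.biUnion_subset.2 fun i _ => Finset.filter_subset _ _)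
  · intro i hi j hj hij
    rw [Function.onFun, Finset.disjoint_filter]
    exact fun x hx hix hjx => hij (hP x hx i hi j hj hix hjx)

theorem sum_card_filter_add_sum_card_filter_le {α ι κ : Type*} (X : Finset α) (S : Finset ι)
    (T : Finset κ) (P : ι → α → Prop) (Q : κ → α → Prop)
    [∀ i, DecidablePred (P i)] [∀ j, DecidablePred (Q j)]
    (hP : ∀ x ∈ X, ∀ i ∈ S, ∀ j ∈ S, P i x → P j x → i = j)
    (hQ : ∀ x ∈ X, ∀ i ∈ T, ∀ j ∈ T, Q i x → Q j x → i = j)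
    (hPQ : ∀ x ∈ X, ∀ i ∈ S, ∀ j ∈ T, P i x → ¬ Q j x) :
    ∑ i ∈ S, (X.filter (P i)).card + ∑ j ∈ T, (X.filter (Q j)).card ≤ X.card := by
  classical
  rw [← Finset.card_filter_add_card_filter_not (s := X) fun x => ∃ i ∈ S, P i x]
  refine add_le_add ((Finset.sum_le_sum fun i hi => ?_).trans (sum_card_filter_le _ S P ?_))
    ((Finset.sum_le_sum fun j hj => ?_).trans (sum_card_filter_le _ T Q ?_))
  · exact Finset.card_le_card fun x hx => by grind
  · exact fun x hx => hP x (Finset.mem_of_mem_filter x hx)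
  · exact Finset.card_le_card fun x hx => by grind
  · exact fun x hx => hQ x (Finset.mem_of_mem_filter x hx)

theorem card_le_card_image_add {ι α : Type*} [DecidableEq α] {R I N : Finset ι}
    {g : ι → α} (h : ∀ j ∈ R, ∀ k ∈ R, j ≠ k → g j = g k → j ∉ I → k ∈ N) :
    R.card ≤ (R.image g).card + N.card + (I.card - 1) := by
  classical
  have hinj : Set.InjOn g ((R \ N) \ I : Finset ι) := fun j hj k hk hjk => by grind
  have hdisj : Disjoint (((R \ N) \ I).image g) (((R \ N) ∩ I).image g) := by
    rw [Finset.disjoint_left]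
    grind
  have himage : (((R \ N) \ I).image g ∪ ((R \ N) ∩ I).image g).card ≤ (R.image g).card :=
    Finset.card_le_card (by grind)
  rw [Finset.card_union_of_disjoint hdisj, Finset.card_image_of_injOn hinj] at himage
  have hsdiff := Finset.card_sdiff_add_card_inter (R \ N) I
  have hR := Finset.card_le_card_sdiff_add_card (s := R) (t := N)
  have hI : ((R \ N) ∩ I).card ≤ I.card := Finset.card_le_card Finset.inter_subset_right
  obtain hempty | hne := ((R \ N) ∩ I).eq_empty_or_nonempty
  · rw [hempty, Finset.card_empty] at hsdiff
    omega
  · have := (hne.image g).card_pos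
    omega

theorem sum_range_add_of_periodic {M : Type*} [AddCancelCommMonoid M] {f : ℕ → M} {n : ℕ}
    (hf : Function.Periodic f n) (r : ℕ) :
    ∑ i ∈ Finset.range n, f (i + r) = ∑ i ∈ Finset.range n, f i := by
  induction r with
  | zero => rfl
  | succ r ih =>
    have h := Finset.sum_range_succ' (fun i => f (i + r)) n
    rw [Finset.sum_range_succ, add_comm n r, hf, zero_add] at h
    simpa only [add_assoc, add_comm 1 r, ih] using (add_right_cancel h).symm

theorem sum_range_three_mul {M : Type*} [AddCommMonoid M] (f : ℕ → M) (k : ℕ) :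
    ∑ i ∈ Finset.range (3 * k), f i =
      ∑ j ∈ Finset.range k, (f (3 * j) + f (3 * j + 1) + f (3 * j + 2)) := by
  induction k with
  | zero => rfl
  | succ k ih =>
    rw [mul_add_one, Finset.sum_range_succ, Finset.sum_range_succ, Finset.sum_range_succ,
      Finset.sum_range_succ, ih, add_assoc, add_assoc, ← add_assoc (f (3 * k))]

theorem card_add_card_filter_two_le_le_sum {ι : Type*} {T : Finset ι} {f : ι → ℕ}
    (hf : ∀ i ∈ T, 1 ≤ f i) : T.card + (T.filter (2 ≤ f ·)).card ≤ ∑ i ∈ T, f i := by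
  rw [Finset.card_filter, Finset.card_eq_sum_ones, ← Finset.sum_add_distrib]
  refine Finset.sum_le_sum fun i hi => ?_
  have := hf i hi
  split_ifs <;> omega

end Counting

/-! ### The trace of a sequence of operations -/

section Trace

variable {sA sB : Bool} {G₀ G G' : BGraph}

/-- A record of how `G` arose from `G₀`: the vertex of `G₀` each vertex descends from, the vertices
created by splittings, the edges of `G₀` of which some copy was deleted and the pairs of vertices
of `G₀` of which some copies were joined. -/
structure EditTrace (G₀ G : BGraph) where
  origin : ℕ → ℕ
  created : Finset ℕ
  lost : Finset (Sym2 ℕ)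
  gained : Finset (Sym2 ℕ)
  origin_eq : ∀ x ∈ verts G, x ∉ created → origin x = x
  origin_mem_A : ∀ x ∈ G.A, origin x ∈ G₀.A
  origin_mem_B : ∀ x ∈ G.B, origin x ∈ G₀.B
  mem_verts : ∀ x y, G.Adj x y → x ∈ verts G
  exists_adj : ∀ x y, G₀.Adj x y → s(x, y) ∉ lost → ∃ x' y', origin x' = x ∧ origin y' = y ∧
    G.Adj x' y'
  adj_or_gained : ∀ x y, G.Adj x y →
    G₀.Adj (origin x) (origin y) ∨ s(origin x, origin y) ∈ gained
  gained_sides : ∀ x y, s(x, y) ∈ gained → (x ∈ G₀.A ∧ y ∈ G₀.B) ∨ (x ∈ G₀.B ∧ y ∈ G₀.A)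

namespace EditTrace

/-- The number of operations a trace accounts for. -/
def cost (t : EditTrace G₀ G) : ℕ := t.created.card + t.lost.card + t.gained.card

/-- The trace of the empty sequence of operations. -/
def refl (h : ∀ x y, G.Adj x y → x ∈ verts G) : EditTrace G G where
  origin := id
  created := ∅
  lost := ∅
  gained := ∅
  origin_eq _ _ _ := rfl
  origin_mem_A _ := id
  origin_mem_B _ := id
  mem_verts := h
  exists_adj x y hxy _ := ⟨x, y, rfl, rfl, hxy⟩
  adj_or_gained _ _ := Or.inl
  gained_sides _ _ h := absurd h (Finset.notMem_empty _)

theorem cost_refl (h : ∀ x y, G.Adj x y → x ∈ verts G) : (refl h).cost = 0 := rfl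

theorem exists_del {u v : ℕ} (t : EditTrace G₀ G) (h : OpStep sA sB (Op.del u v) G G') :
    ∃ t' : EditTrace G₀ G', t'.cost ≤ t.cost + 1 := by
  obtain ⟨-, hA, hB, hadj⟩ := h
  have hverts : verts G' = verts G := by rw [verts, hA, hB, verts]
  refine ⟨{ t with
    lost := insert s(t.origin u, t.origin v) t.lost
    origin_eq := fun x hx => t.origin_eq x (hverts ▸ hx)
    origin_mem_A := fun x hx => t.origin_mem_A x (hA ▸ hx)
    origin_mem_B := fun x hx => t.origin_mem_B x (hB ▸ hx)
    mem_verts := fun x y hxy => hverts ▸ t.mem_verts x y ((hadj x y).1 hxy).1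
    exists_adj := ?_
    adj_or_gained := fun x y hxy => t.adj_or_gained x y ((hadj x y).1 hxy).1 }, ?_⟩
  · intro x y hxy hlost
    obtain ⟨hne, hlost⟩ := not_or.1 (mt Finset.mem_insert.2 hlost)
    obtain ⟨x', y', rfl, rfl, hadj'⟩ := t.exists_adj x y hxy hlost
    refine ⟨x', y', rfl, rfl, (hadj x' y').2 ⟨hadj', ?_⟩⟩
    rintro (⟨rfl, rfl⟩ | ⟨rfl, rfl⟩)
    exacts [hne rfl, hne Sym2.eq_swap]
  · have := Finset.card_insert_le s(t.origin u, t.origin v) t.lost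
    simp only [cost]
    omega

theorem exists_add {u v : ℕ} (t : EditTrace G₀ G) (h : OpStep sA sB (Op.add u v) G G') :
    ∃ t' : EditTrace G₀ G', t'.cost ≤ t.cost + 1 := by
  obtain ⟨⟩ | ⟨hu, hv, -, hA, hB, hadj⟩ := h
  have hverts : verts G' = verts G := by rw [verts, hA, hB, verts]
  refine ⟨{ t with
    gained := insert s(t.origin u, t.origin v) t.gained
    origin_eq := fun x hx => t.origin_eq x (hverts ▸ hx)
    origin_mem_A := fun x hx => t.origin_mem_A x (hA ▸ hx)
    origin_mem_B := fun x hx => t.origin_mem_B x (hB ▸ hx)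
    mem_verts := ?_
    exists_adj := ?_
    adj_or_gained := ?_
    gained_sides := ?_ }, ?_⟩
  · rintro x y hxy
    rw [hverts]
    obtain hxy | ⟨rfl, -⟩ | ⟨rfl, -⟩ := (hadj x y).1 hxy
    exacts [t.mem_verts x y hxy, Or.inl hu, Or.inr hv]
  · intro x y hxy hlost
    obtain ⟨x', y', hx, hy, hadj'⟩ := t.exists_adj x y hxy hlost
    exact ⟨x', y', hx, hy, (hadj x' y').2 (Or.inl hadj')⟩
  · intro x y hxy
    obtain hxy | ⟨rfl, rfl⟩ | ⟨rfl, rfl⟩ := (hadj x y).1 hxy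
    · exact (t.adj_or_gained x y hxy).imp_right (Finset.mem_insert_of_mem ·)
    · exact Or.inr (Finset.mem_insert_self _ _)
    · exact Or.inr (Sym2.eq_swap ▸ Finset.mem_insert_self _ _)
  · intro x y hxy
    obtain hxy | hxy := Finset.mem_insert.1 hxy
    · obtain ⟨rfl, rfl⟩ | ⟨rfl, rfl⟩ := Sym2.eq_iff.1 hxy
      · exact Or.inl ⟨t.origin_mem_A u hu, t.origin_mem_B v hv⟩
      · exact Or.inr ⟨t.origin_mem_B v hv, t.origin_mem_A u hu⟩
    · exact t.gained_sides x y hxy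
  · have := Finset.card_insert_le s(t.origin u, t.origin v) t.gained
    simp only [cost]
    omega

end EditTrace

/-- The map identifying the copy `v'` created by a splitting with the vertex `v` that was split. -/
def collapse (v v' : ℕ) : ℕ → ℕ := Function.update id v' v

theorem collapse_self (v v' : ℕ) : collapse v v' v' = v := Function.update_self ..

theorem collapse_of_ne {v v' x : ℕ} (h : x ≠ v') : collapse v v' x = x :=
  Function.update_of_ne h ..

namespace OpStep

variable {v v' : ℕ} {N1 N2 : Set ℕ}

theorem adj_collapse (h : OpStep sA sB (Op.split v v' N1 N2) G G')
    (hG : ∀ x y, G.Adj x y → x ∈ verts G) {x y : ℕ} (hxy : G'.Adj x y) :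
    G.Adj (collapse v v' x) (collapse v v' y) := by
  obtain ⟨⟩ | ⟨⟩ | ⟨hside, hfresh, hcover, -, -, hadj⟩ := h
  have hv : v ≠ v' := by
    rintro rfl
    exact hfresh (hside.imp And.left And.left)
  have hne {x y : ℕ} (h : G.Adj x y) : x ≠ v' := fun hx => hfresh (hx ▸ hG x y h)
  have hN1 {y : ℕ} (hy : y ∈ N1) : G.Adj v y := hcover.subset (Or.inl hy)
  have hN2 {y : ℕ} (hy : y ∈ N2) : G.Adj v y := hcover.subset (Or.inr hy)
  obtain ⟨hxy, -, -⟩ | ⟨rfl, hy⟩ | ⟨rfl, hx⟩ | ⟨rfl, hy⟩ | ⟨rfl, hx⟩ := (hadj x y).1 hxy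
  · rwa [collapse_of_ne (hne hxy), collapse_of_ne (hne (G.symm _ _ hxy))]
  · rw [collapse_of_ne hv, collapse_of_ne (hne (G.symm _ _ (hN1 hy)))]
    exact hN1 hy
  · rw [collapse_of_ne hv, collapse_of_ne (hne (G.symm _ _ (hN1 hx)))]
    exact G.symm _ _ (hN1 hx)
  · rw [collapse_self, collapse_of_ne (hne (G.symm _ _ (hN2 hy)))]
    exact hN2 hy
  · rw [collapse_self, collapse_of_ne (hne (G.symm _ _ (hN2 hx)))]
    exact G.symm _ _ (hN2 hx)

theorem exists_adj_of_split (h : OpStep sA sB (Op.split v v' N1 N2) G G')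
    (hG : ∀ x y, G.Adj x y → x ∈ verts G) {x y : ℕ} (hxy : G.Adj x y) :
    ∃ x' y', collapse v v' x' = x ∧ collapse v v' y' = y ∧ G'.Adj x' y' := by
  obtain ⟨⟩ | ⟨⟩ | ⟨-, hfresh, hcover, -, -, hadj⟩ := h
  have hne {x y : ℕ} (h : G.Adj x y) : x ≠ v' := fun hx => hfresh (hx ▸ hG x y h)
  have hx := collapse_of_ne (v := v) (hne hxy)
  have hy := collapse_of_ne (v := v) (hne (G.symm x y hxy))
  by_cases hxv : x = v
  · subst hxv
    obtain hN | hN := hcover.superset hxy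
    · exact ⟨x, y, hx, hy, (hadj x y).2 (by tauto)⟩
    · exact ⟨v', y, collapse_self .., hy, (hadj v' y).2 (by tauto)⟩
  by_cases hyv : y = v
  · subst hyv
    obtain hN | hN := hcover.superset (G.symm x y hxy)
    · exact ⟨x, y, hx, hy, (hadj x y).2 (by tauto)⟩
    · exact ⟨x, v', hx, collapse_self .., (hadj x v').2 (by tauto)⟩
  exact ⟨x, y, hx, hy, (hadj x y).2 (Or.inl ⟨hxy, hxv, hyv⟩)⟩

theorem collapse_mem_A (h : OpStep sA sB (Op.split v v' N1 N2) G G') {x : ℕ} (hx : x ∈ G'.A) :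
    collapse v v' x ∈ G.A := by
  obtain ⟨⟩ | ⟨⟩ | ⟨hside, hfresh, -, hA, hB, -⟩ := h
  have hold (hx : x ∈ G.A) : collapse v v' x ∈ G.A := by
    rwa [collapse_of_ne]
    rintro rfl
    exact hfresh (Or.inl hx)
  obtain ⟨hv, -⟩ | ⟨hv, -⟩ := hside
  · obtain rfl | hx := (hA hv).1.subset hx
    exacts [(collapse_self v x).symm ▸ hv, hold hx]
  · exact hold ((hB hv).1 ▸ hx)

theorem collapse_mem_B (h : OpStep sA sB (Op.split v v' N1 N2) G G') {x : ℕ} (hx : x ∈ G'.B) :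
    collapse v v' x ∈ G.B := by
  obtain ⟨⟩ | ⟨⟩ | ⟨hside, hfresh, -, hA, hB, -⟩ := h
  have hold (hx : x ∈ G.B) : collapse v v' x ∈ G.B := by
    rwa [collapse_of_ne]
    rintro rfl
    exact hfresh (Or.inr hx)
  obtain ⟨hv, -⟩ | ⟨hv, -⟩ := hside
  · exact hold ((hA hv).2 ▸ hx)
  · obtain rfl | hx := (hB hv).2.subset hx
    exacts [(collapse_self v x).symm ▸ hv, hold hx]

theorem verts_of_split (h : OpStep sA sB (Op.split v v' N1 N2) G G') :
    verts G' = insert v' (verts G) := by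
  obtain ⟨⟩ | ⟨⟩ | ⟨hside, -, -, hA, hB, -⟩ := h
  obtain ⟨hv, -⟩ | ⟨hv, -⟩ := hside
  · rw [verts, (hA hv).1, (hA hv).2, Set.insert_union, verts]
  · rw [verts, (hB hv).1, (hB hv).2, Set.union_insert, verts]

theorem mem_verts_of_split (h : OpStep sA sB (Op.split v v' N1 N2) G G')
    (hG : ∀ x y, G.Adj x y → x ∈ verts G) {x y : ℕ} (hxy : G'.Adj x y) : x ∈ verts G' := by
  rw [h.verts_of_split]
  by_cases hx : x = v'
  · exact Or.inl hx
  · exact Or.inr (collapse_of_ne hx ▸ hG _ _ (h.adj_collapse hG hxy))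

end OpStep

namespace EditTrace

theorem exists_split {v v' : ℕ} {N1 N2 : Set ℕ} (t : EditTrace G₀ G)
    (h : OpStep sA sB (Op.split v v' N1 N2) G G') :
    ∃ t' : EditTrace G₀ G', t'.cost ≤ t.cost + 1 := by
  refine ⟨{ t with
    origin := t.origin ∘ collapse v v'
    created := insert v' t.created
    origin_eq := ?_
    origin_mem_A := fun x hx => t.origin_mem_A _ (h.collapse_mem_A hx)
    origin_mem_B := fun x hx => t.origin_mem_B _ (h.collapse_mem_B hx)
    mem_verts := fun x y => h.mem_verts_of_split t.mem_verts
    exists_adj := ?_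
    adj_or_gained := fun x y hxy => t.adj_or_gained _ _ (h.adj_collapse t.mem_verts hxy) }, ?_⟩
  · intro x hx hnew
    obtain ⟨hne, hnew⟩ := not_or.1 (mt Finset.mem_insert.2 hnew)
    have hx : x ∈ verts G := (h.verts_of_split.subset hx).resolve_left hne
    rw [Function.comp_apply, collapse_of_ne hne, t.origin_eq x hx hnew]
  · intro x y hxy hlost
    obtain ⟨x₁, y₁, rfl, rfl, hadj⟩ := t.exists_adj x y hxy hlost
    obtain ⟨x', y', rfl, rfl, hadj'⟩ := h.exists_adj_of_split t.mem_verts hadj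
    exact ⟨x', y', rfl, rfl, hadj'⟩
  · have := Finset.card_insert_le v' t.created
    simp only [cost]
    omega

theorem exists_step {op : Op} (t : EditTrace G₀ G) (h : OpStep sA sB op G G') :
    ∃ t' : EditTrace G₀ G', t'.cost ≤ t.cost + 1 :=
  match op with
  | .del _ _ => t.exists_del h
  | .add _ _ => t.exists_add h
  | .split _ _ _ _ => t.exists_split h

theorem exists_of_applySeq {L : List Op} (t : EditTrace G₀ G) (h : ApplySeq sA sB L G G') :
    ∃ t' : EditTrace G₀ G', t'.cost ≤ t.cost + L.length := by
  induction L generalizing G with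
  | nil => exact ⟨h ▸ t, by subst h; rfl⟩
  | cons op L ih =>
    obtain ⟨G₁, hop, hL⟩ := h
    obtain ⟨t₁, ht₁⟩ := t.exists_step hop
    obtain ⟨t', ht'⟩ := ih t₁ hL
    exact ⟨t', by rw [List.length_cons]; omega⟩

/-- The number of splittings spent on the copies of the vertex `x` of `G₀`. -/
def splits (t : EditTrace G₀ G) (x : ℕ) : ℕ := (t.created.filter (t.origin · = x)).card

theorem mem_verts_right (t : EditTrace G₀ G) {x y : ℕ} (h : G.Adj x y) : y ∈ verts G :=
  t.mem_verts y x (G.symm x y h)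

variable (t : EditTrace G₀ G)

theorem card_copies_le {x : ℕ} {T : Finset ℕ}
    (hT : ∀ y ∈ T, y ∈ verts G ∧ t.origin y = x) : T.card ≤ t.splits x + 1 := by
  have hsub : T ⊆ insert x (t.created.filter (t.origin · = x)) := by
    intro y hy
    obtain ⟨hyG, hyx⟩ := hT y hy
    by_cases hnew : y ∈ t.created
    · exact Finset.mem_insert_of_mem (Finset.mem_filter.2 ⟨hnew, hyx⟩)
    · exact Finset.mem_insert.2 (Or.inl (hyx ▸ (t.origin_eq y hyG hnew).symm))
  exact (Finset.card_le_card hsub).trans (Finset.card_insert_le ..)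

theorem one_le_splits {x y z : ℕ} (hy : y ∈ verts G) (hz : z ∈ verts G) (hyz : y ≠ z)
    (hyx : t.origin y = x) (hzx : t.origin z = x) : 1 ≤ t.splits x := by
  have h := t.card_copies_le (x := x) (T := {y, z}) (by simp [*])
  rw [Finset.card_pair hyz] at h
  omega

theorem two_le_splits {x y z w : ℕ} (hy : y ∈ verts G) (hz : z ∈ verts G) (hw : w ∈ verts G)
    (hyz : y ≠ z) (hyw : y ≠ w) (hzw : z ≠ w)
    (hyx : t.origin y = x) (hzx : t.origin z = x) (hwx : t.origin w = x) : 2 ≤ t.splits x := by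
  have h := t.card_copies_le (x := x) (T := {y, z, w}) (by simp [*])
  rw [Finset.card_eq_three.2 ⟨y, z, w, hyz, hyw, hzw, rfl⟩] at h
  omega

/-- The number of copies of the edge `xy` recorded as deleted: `0` or `1`. -/
def lostAt (x y : ℕ) : ℕ := if s(x, y) ∈ t.lost then 1 else 0

/-- The number of copies of the pair `xy` recorded as joined: `0` or `1`. -/
def gainedAt (x y : ℕ) : ℕ := if s(x, y) ∈ t.gained then 1 else 0

theorem lostAt_comm (x y : ℕ) : t.lostAt x y = t.lostAt y x := by
  rw [lostAt, lostAt, Sym2.eq_swap]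

theorem gainedAt_comm (x y : ℕ) : t.gainedAt x y = t.gainedAt y x := by
  rw [gainedAt, gainedAt, Sym2.eq_swap]

theorem exists_adj_of_lostAt_eq_zero {x y : ℕ} (hxy : G₀.Adj x y) (h : t.lostAt x y = 0) :
    ∃ x' y', t.origin x' = x ∧ t.origin y' = y ∧ G.Adj x' y' :=
  t.exists_adj x y hxy fun hlost => one_ne_zero ((if_pos hlost).symm.trans h)

theorem adj_of_gainedAt_eq_zero {x y : ℕ} (hxy : G.Adj x y)
    (h : t.gainedAt (t.origin x) (t.origin y) = 0) : G₀.Adj (t.origin x) (t.origin y) :=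
  (t.adj_or_gained x y hxy).resolve_right fun hgained =>
    one_ne_zero ((if_pos hgained).symm.trans h)

/-- The number of recorded operations that can affect the path `abcd` of `G₀`: those touching one
of its three edges, one of its inner vertices or the pair of its ends. -/
def pathCost (a b c d : ℕ) : ℕ :=
  t.lostAt a b + t.lostAt b c + t.lostAt c d + t.splits b + t.splits c + t.gainedAt a d

theorem pathCost_reverse (a b c d : ℕ) : t.pathCost d c b a = t.pathCost a b c d := by
  rw [pathCost, pathCost, t.lostAt_comm d c, t.lostAt_comm c b, t.lostAt_comm b a,
    t.gainedAt_comm d a]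
  ring

variable {a b c d : ℕ}

theorem exists_adj_ne_or_one_le_splits (hG : IsBicliqueUnion G) (hab : G₀.Adj a b)
    (hbc : G₀.Adj b c) (hcd : G₀.Adj c d) (had : ¬ G₀.Adj a d)
    (hzero : t.lostAt a b + t.lostAt b c + t.lostAt c d + t.gainedAt a d = 0) :
    (∃ a' b₁ b₂ c', t.origin a' = a ∧ t.origin b₁ = b ∧ t.origin b₂ = b ∧ t.origin c' = c ∧
      G.Adj a' b₁ ∧ G.Adj b₂ c' ∧ b₁ ≠ b₂) ∨ 1 ≤ t.splits c := by
  obtain ⟨a', b₁, rfl, hb₁, hadj₁⟩ := t.exists_adj_of_lostAt_eq_zero hab (by omega)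
  obtain ⟨b₂, c₁, hb₂, hc₁, hadj₂⟩ := t.exists_adj_of_lostAt_eq_zero hbc (by omega)
  obtain ⟨c₂, d', hc₂, rfl, hadj₃⟩ := t.exists_adj_of_lostAt_eq_zero hcd (by omega)
  by_cases hb : b₁ = b₂
  · by_cases hc : c₁ = c₂
    · subst hb hc
      exact (had (t.adj_of_gainedAt_eq_zero (hG _ _ _ _ hadj₁ hadj₂ hadj₃) (by omega))).elim
    · exact Or.inr (t.one_le_splits (t.mem_verts_right hadj₂) (t.mem_verts _ _ hadj₃) hc hc₁ hc₂)
  · exact Or.inl ⟨a', b₁, b₂, c₁, rfl, hb₁, hb₂, hc₁, hadj₁, hadj₂, hb⟩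

theorem one_le_pathCost (hG : IsBicliqueUnion G) (hab : G₀.Adj a b) (hbc : G₀.Adj b c)
    (hcd : G₀.Adj c d) (had : ¬ G₀.Adj a d) : 1 ≤ t.pathCost a b c d := by
  rw [pathCost]
  by_contra! h
  obtain ⟨a', b₁, b₂, c', -, hb₁, hb₂, -, hadj₁, hadj₂, hne⟩ | hc :=
    t.exists_adj_ne_or_one_le_splits hG hab hbc hcd had (by omega)
  · have := t.one_le_splits (t.mem_verts_right hadj₁) (t.mem_verts _ _ hadj₂) hne hb₁ hb₂
    omega
  · omega

theorem two_le_pathCost (hG : IsBicliqueUnion G) (hab : G₀.Adj a b) (hbc : G₀.Adj b c)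
    (hcd : G₀.Adj c d) (had : ¬ G₀.Adj a d) {w : ℕ} (hw : w ∈ verts G) (hwb : t.origin w = b)
    (hwac : ∀ z, G.Adj w z → t.origin z ≠ a ∧ t.origin z ≠ c) : 2 ≤ t.pathCost a b c d := by
  have hne_of_left {a' b' : ℕ} (ha' : t.origin a' = a) (hadj : G.Adj a' b') : b' ≠ w :=
    fun e => (hwac a' (G.symm _ _ (e ▸ hadj))).1 ha'
  have hne_of_right {b' c' : ℕ} (hc' : t.origin c' = c) (hadj : G.Adj b' c') : b' ≠ w :=
    fun e => (hwac c' (e ▸ hadj)).2 hc'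
  have hsplit (h : t.lostAt a b = 0 ∨ t.lostAt b c = 0) : 1 ≤ t.splits b := by
    obtain h | h := h
    · obtain ⟨a', b', ha', hb', hadj⟩ := t.exists_adj_of_lostAt_eq_zero hab h
      exact t.one_le_splits (t.mem_verts_right hadj) hw (hne_of_left ha' hadj) hb' hwb
    · obtain ⟨b', c', hb', hc', hadj⟩ := t.exists_adj_of_lostAt_eq_zero hbc h
      exact t.one_le_splits (t.mem_verts _ _ hadj) hw (hne_of_right hc' hadj) hb' hwb
  rw [pathCost]
  by_cases hzero : t.lostAt a b + t.lostAt b c + t.lostAt c d + t.gainedAt a d = 0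
  · obtain ⟨a', b₁, b₂, c', ha', hb₁, hb₂, hc', hadj₁, hadj₂, hne⟩ | hc :=
      t.exists_adj_ne_or_one_le_splits hG hab hbc hcd had hzero
    · have := t.two_le_splits (t.mem_verts_right hadj₁) (t.mem_verts _ _ hadj₂) hw hne
        (hne_of_left ha' hadj₁) (hne_of_right hc' hadj₂) hb₁ hb₂ hwb
      omega
    · omega
  · omega

end EditTrace

end Trace

/-! ### Operations within a set of vertices -/

section Within

/-- The pairs in `E` both of whose elements lie in `S`. -/
noncomputable def within (S : Set ℕ) (E : Finset (Sym2 ℕ)) : Finset (Sym2 ℕ) := by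
  classical exact E.filter fun e => ∀ z ∈ e, z ∈ S

variable {S : Set ℕ} {E : Finset (Sym2 ℕ)} {ι : Type*} {T : Finset ι} {f : ι → Sym2 ℕ}

theorem mem_within {e : Sym2 ℕ} : e ∈ within S E ↔ e ∈ E ∧ ∀ z ∈ e, z ∈ S := by
  classical exact Finset.mem_filter

theorem sum_indicator_le_card_within (hf : Set.InjOn f T) (hS : ∀ i ∈ T, ∀ z ∈ f i, z ∈ S) :
    ∑ i ∈ T, (if f i ∈ E then 1 else 0) ≤ (within S E).card := by
  rw [← Finset.card_filter]
  refine Finset.card_le_card_of_injOn f (fun i hi => ?_) (hf.mono (Finset.filter_subset ..))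
  obtain ⟨hi, hE⟩ := Finset.mem_filter.1 hi
  exact mem_within.2 ⟨hE, hS i hi⟩

theorem sum_indicator_le_two_mul_card_within {x : ι → ℕ} (hx : Set.InjOn x T)
    (hxf : ∀ i ∈ T, x i ∈ f i) (hS : ∀ i ∈ T, ∀ z ∈ f i, z ∈ S) :
    ∑ i ∈ T, (if f i ∈ E then 1 else 0) ≤ 2 * (within S E).card := by
  rw [← Finset.card_filter]
  refine Finset.card_le_mul_card_image_of_maps_to (f := f) (fun i hi => ?_) 2 fun e _ => ?_
  · obtain ⟨hi, hE⟩ := Finset.mem_filter.1 hi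
    exact mem_within.2 ⟨hE, hS i hi⟩
  · have hcard : e.toFinset.card ≤ 2 := by
      rw [Sym2.card_toFinset]
      split_ifs <;> omega
    rw [Finset.filter_filter]
    refine (Finset.card_le_card_of_injOn x (fun i hi => ?_)
      (hx.mono (Finset.filter_subset ..))).trans hcard
    obtain ⟨hiT, -, rfl⟩ := Finset.mem_filter.1 hi
    exact Sym2.mem_toFinset.2 (hxf i hiT)

end Within

/-! ### The cost of a trace on a cycle -/

section Cycle

variable {G₀ G : BGraph}

/-- The vertices `x i` run round a cycle of `G₀` of length `n`, over and over again, and vertices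
three apart on it are not adjacent. -/
structure LongCycle (G₀ : BGraph) (x : ℕ → ℕ) (n : ℕ) : Prop where
  eq_iff : ∀ i j, x i = x j ↔ i ≡ j [MOD n]
  adj : ∀ i, G₀.Adj (x i) (x (i + 1))
  not_adj : ∀ i, ¬ G₀.Adj (x i) (x (i + 3))

variable {x : ℕ → ℕ} {n k : ℕ} {S : Set ℕ}

namespace LongCycle

theorem apply_add_length (hx : LongCycle G₀ x n) (i : ℕ) : x (i + n) = x i :=
  (hx.eq_iff _ _).2 (Nat.add_modEq_right)

theorem apply_ne_apply_add (hx : LongCycle G₀ x n) {m : ℕ} (hm : ¬ n ∣ m) (i : ℕ) :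
    x i ≠ x (i + m) := by
  rw [Ne, hx.eq_iff, Nat.modEq_iff_dvd' (Nat.le_add_right i m), Nat.add_sub_cancel_left]
  exact hm

theorem injOn (hx : LongCycle G₀ x n) : Set.InjOn x (Finset.range n) := by
  intro i hi j hj hij
  exact Nat.ModEq.eq_of_lt_of_lt ((hx.eq_iff i j).1 hij) (Finset.mem_range.1 hi)
    (Finset.mem_range.1 hj)

theorem modEq_of_chord_eq (hx : LongCycle G₀ x n) {i j m : ℕ} (hm : ¬ n ∣ 2 * m)
    (h : s(x i, x (i + m)) = s(x j, x (j + m))) : i ≡ j [MOD n] := by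
  obtain ⟨hij, -⟩ | ⟨hij, hji⟩ := Sym2.eq_iff.1 h
  · exact (hx.eq_iff i j).1 hij
  · refine absurd ?_ hm
    have h₁ := (hx.eq_iff _ _).1 hij
    have h₂ := ((hx.eq_iff _ _).1 hji).symm.trans (h₁.add_right m)
    rw [add_assoc, ← two_mul] at h₂
    simpa using (Nat.modEq_iff_dvd' (Nat.le_add_right j (2 * m))).1 h₂

end LongCycle

namespace EditTrace

variable (t : EditTrace G₀ G)

/-- The number of recorded operations carried out on vertices descending from `S`. -/
noncomputable def costWithin (S : Set ℕ) : ℕ := by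
  classical exact (t.created.filter (t.origin · ∈ S)).card + (within S t.lost).card +
    (within S t.gained).card

theorem sum_splits_le_card {ι : Type*} {T : Finset ι} {x : ι → ℕ} [DecidablePred (t.origin · ∈ S)]
    (hx : Set.InjOn x T) (hS : ∀ i, x i ∈ S) :
    ∑ i ∈ T, t.splits (x i) ≤ (t.created.filter (t.origin · ∈ S)).card := by
  have hfilter (i : ι) : t.created.filter (t.origin · = x i) =
      (t.created.filter (t.origin · ∈ S)).filter (t.origin · = x i) := by
    rw [Finset.filter_filter]
    exact Finset.filter_congr fun y _ => ⟨fun h => ⟨h ▸ hS i, h⟩, And.right⟩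
  simp only [splits, hfilter]
  exact sum_card_filter_le _ _ _ fun y _ i hi j hj h₁ h₂ => hx hi hj (h₁.symm.trans h₂)

theorem splits_le_card {x : ℕ} [DecidablePred (t.origin · ∈ S)] (hx : x ∈ S) :
    t.splits x ≤ (t.created.filter (t.origin · ∈ S)).card :=
  Finset.card_le_card (Finset.monotone_filter_right _ fun _ _ h => h ▸ hx)

theorem gainedAt_le_card {x y : ℕ} (hx : x ∈ S) (hy : y ∈ S) :
    t.gainedAt x y ≤ (within S t.gained).card := by
  rw [gainedAt]
  split_ifs with h
  · exact Finset.card_pos.2 ⟨_, mem_within.2 ⟨h, by simp [hx, hy]⟩⟩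
  · exact Nat.zero_le _

/-- The cost of the path formed by four consecutive terms of `x`, from `x i` on. -/
def windowCost (x : ℕ → ℕ) (i : ℕ) : ℕ :=
  t.pathCost (x i) (x (i + 1)) (x (i + 2)) (x (i + 3))

/-- Some copy of the vertex `y` of `G₀` has no neighbour that descends from `S`. -/
def HasDetachedCopy (S : Set ℕ) (y : ℕ) : Prop :=
  ∃ w ∈ verts G, t.origin w = y ∧ ∀ z, G.Adj w z → t.origin z ∉ S

end EditTrace

namespace LongCycle

section

variable (hx : LongCycle G₀ x n) (t : EditTrace G₀ G)
include hx

theorem sum_lostAt_le (hn : 3 ≤ n) (hS : ∀ i, x i ∈ S) :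
    ∑ i ∈ Finset.range n, t.lostAt (x i) (x (i + 1)) ≤ (within S t.lost).card := by
  refine sum_indicator_le_card_within (fun i hi j hj hij => ?_) ?_
  · have hn2 : ¬ n ∣ 2 * 1 := fun h => by linarith [Nat.le_of_dvd two_pos h]
    exact (hx.modEq_of_chord_eq hn2 hij).eq_of_lt_of_lt (Finset.mem_range.1 hi)
      (Finset.mem_range.1 hj)
  · simp [hS]

theorem sum_gainedAt_le (hS : ∀ i, x i ∈ S) :
    ∑ i ∈ Finset.range n, t.gainedAt (x i) (x (i + 3)) ≤ 2 * (within S t.gained).card :=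
  sum_indicator_le_two_mul_card_within hx.injOn (fun _ _ => Sym2.mem_mk_left _ _) (by simp [hS])

theorem sum_windowCost : ∑ i ∈ Finset.range n, t.windowCost x i =
    3 * ∑ i ∈ Finset.range n, t.lostAt (x i) (x (i + 1)) +
      2 * ∑ i ∈ Finset.range n, t.splits (x i) +
      ∑ i ∈ Finset.range n, t.gainedAt (x i) (x (i + 3)) := by
  have hlost : Function.Periodic (fun i => t.lostAt (x i) (x (i + 1))) n := fun i => by
    simp only [add_right_comm i n, hx.apply_add_length]
  have hsplits : Function.Periodic (fun i => t.splits (x i)) n := fun i => by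
    simp only [hx.apply_add_length]
  simp only [EditTrace.windowCost, EditTrace.pathCost, Finset.sum_add_distrib]
  have h₁ := sum_range_add_of_periodic hlost 1
  have h₂ := sum_range_add_of_periodic hlost 2
  have h₃ := sum_range_add_of_periodic hsplits 1
  have h₄ := sum_range_add_of_periodic hsplits 2
  simp only [add_assoc, Nat.reduceAdd] at h₁ h₂ h₃ h₄ ⊢
  omega

theorem windowCost_mod (i : ℕ) : t.windowCost x (i % n) = t.windowCost x i := by
  refine Function.Periodic.map_mod_nat (f := t.windowCost x) (fun i => ?_) i
  simp only [EditTrace.windowCost, add_right_comm i n, hx.apply_add_length]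

end

variable {t : EditTrace G₀ G}

theorem one_le_windowCost (hx : LongCycle G₀ x n) (hG : IsBicliqueUnion G) (i : ℕ) :
    1 ≤ t.windowCost x i :=
  t.one_le_pathCost hG (hx.adj i) (hx.adj (i + 1)) (hx.adj (i + 2)) (hx.not_adj i)

variable (hx : LongCycle G₀ x (3 * k)) (hS : ∀ i, x i ∈ S)
include hx hS

theorem sum_windowCost_le (hk : 1 ≤ k) :
    ∑ i ∈ Finset.range (3 * k), t.windowCost x i ≤ 3 * t.costWithin S := by
  classical
  have hlost := hx.sum_lostAt_le t (by omega) hS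
  have hsplits := t.sum_splits_le_card hx.injOn hS
  have hgained := hx.sum_gainedAt_le t hS
  have hsum := hx.sum_windowCost t
  simp only [EditTrace.costWithin]
  omega

theorem le_costWithin (hk : 1 ≤ k) (hG : IsBicliqueUnion G) : k ≤ t.costWithin S := by
  have h := Finset.card_nsmul_le_sum (Finset.range (3 * k)) (t.windowCost x) 1
    fun i _ => hx.one_le_windowCost hG i
  rw [Finset.card_range, smul_eq_mul, mul_one] at h
  exact Nat.le_of_mul_le_mul_left (h.trans (hx.sum_windowCost_le hS hk)) three_pos

theorem splits_gainedAt_windowCost_of_costWithin_le (hk : 1 ≤ k) (hG : IsBicliqueUnion G)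
    (hcost : t.costWithin S ≤ k) (i : ℕ) :
    t.splits (x i) = 0 ∧ t.gainedAt (x i) (x (i + 3)) = 0 ∧ t.windowCost x i = 1 := by
  classical
  have hlost := hx.sum_lostAt_le t (by omega) hS
  have hsplits := t.sum_splits_le_card hx.injOn hS
  have hgained := hx.sum_gainedAt_le t hS
  have hsum := hx.sum_windowCost t
  have hone : ∀ i ∈ Finset.range (3 * k), 1 ≤ t.windowCost x i :=
    fun i _ => hx.one_le_windowCost hG i
  have hle : ∑ i ∈ Finset.range (3 * k), 1 ≤ ∑ i ∈ Finset.range (3 * k), t.windowCost x i :=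
    Finset.sum_le_sum hone
  have hi_splits := t.splits_le_card (hS i)
  have hi_gained := t.gainedAt_le_card (hS i) (hS (i + 3))
  rw [Finset.sum_const, Finset.card_range, smul_eq_mul, mul_one] at hle
  simp only [EditTrace.costWithin] at hcost
  refine ⟨by omega, by omega, ?_⟩
  have heq : ∑ i ∈ Finset.range (3 * k), 1 = ∑ i ∈ Finset.range (3 * k), t.windowCost x i := by
    rw [Finset.sum_const, Finset.card_range, smul_eq_mul, mul_one]
    omega
  rw [← hx.windowCost_mod, ← (Finset.sum_eq_sum_iff_of_le hone).1 heq _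
    (Finset.mem_range.2 (Nat.mod_lt _ (by omega)))]

theorem sum_windowCost_three_mul_le [DecidablePred (t.origin · ∈ S)] (hk : 1 ≤ k) (r : ℕ) :
    ∑ j ∈ Finset.range k, t.windowCost x (3 * j + r) ≤
      (t.created.filter (t.origin · ∈ S)).card + (within S t.lost).card +
        ∑ j ∈ Finset.range k, t.gainedAt (x (3 * j + r)) (x (3 * j + r + 3)) := by
  set f : ℕ → ℕ := fun i => t.lostAt (x i) (x (i + 1)) + t.splits (x i) with hf
  have hperiodic : Function.Periodic f (3 * k) := fun i => by
    simp only [hf, add_right_comm i (3 * k), hx.apply_add_length]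
  have hlost := hx.sum_lostAt_le t (by omega) hS
  have hsplits := t.sum_splits_le_card hx.injOn hS
  calc ∑ j ∈ Finset.range k, t.windowCost x (3 * j + r)
      ≤ ∑ j ∈ Finset.range k, (f (3 * j + r) + f (3 * j + 1 + r) + f (3 * j + 2 + r)) +
          ∑ j ∈ Finset.range k, t.gainedAt (x (3 * j + r)) (x (3 * j + r + 3)) := by
        rw [← Finset.sum_add_distrib]
        refine Finset.sum_le_sum fun j _ => ?_
        simp only [hf, EditTrace.windowCost, EditTrace.pathCost, add_right_comm _ _ r,
          add_assoc (_ + r), Nat.reduceAdd]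
        omega
    _ ≤ _ := by
        rw [← sum_range_three_mul (fun i => f (i + r)), sum_range_add_of_periodic hperiodic,
          Finset.sum_add_distrib]
        omega

theorem sum_gainedAt_three_mul_le (hk : 3 ≤ k) (r : ℕ) :
    ∑ j ∈ Finset.range k, t.gainedAt (x (3 * j + r)) (x (3 * j + r + 3)) ≤
      (within S t.gained).card := by
  refine sum_indicator_le_card_within (fun i hi j hj hij => ?_) (by simp [hS])
  have hk6 : ¬ 3 * k ∣ 2 * 3 := fun h => by linarith [Nat.le_of_dvd (by norm_num) h]
  have hmod := Nat.ModEq.add_right_cancel' r (hx.modEq_of_chord_eq hk6 hij)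
  exact (Nat.ModEq.mul_left_cancel' three_ne_zero hmod).eq_of_lt_of_lt (Finset.mem_range.1 hi)
    (Finset.mem_range.1 hj)

theorem add_card_le_costWithin (hk : 2 ≤ k) (hG : IsBicliqueUnion G) {r : ℕ} {J : Finset ℕ}
    (hJk : J ⊆ Finset.range k) (hJ : ∀ j ∈ J, 2 ≤ t.windowCost x (3 * j + r))
    (hcard : 2 * J.card ≤ k) : k + J.card ≤ t.costWithin S := by
  classical
  by_cases hexact : t.costWithin S ≤ k
  · have hempty : J = ∅ := Finset.eq_empty_of_forall_notMem fun j hj => by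
      obtain ⟨-, -, hone⟩ :=
        hx.splits_gainedAt_windowCost_of_costWithin_le hS (by omega) hG hexact (3 * j + r)
      have := hJ j hj
      omega
    simpa [hempty] using hx.le_costWithin hS (by omega) hG
  -- For `k = 2` the two windows share their pair of ends, so that their costs cannot be added.
  obtain rfl | hk3 := hk.eq_or_lt
  · omega
  have hsum := card_add_card_filter_two_le_le_sum (T := Finset.range k)
    (f := fun j => t.windowCost x (3 * j + r)) fun j _ => hx.one_le_windowCost hG _
  have hsub : J.card ≤ ((Finset.range k).filter fun j => 2 ≤ t.windowCost x (3 * j + r)).card :=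
    Finset.card_le_card fun j hj => Finset.mem_filter.2 ⟨hJk hj, hJ j hj⟩
  have hwindows := hx.sum_windowCost_three_mul_le (t := t) hS (by omega) r
  have hgained := hx.sum_gainedAt_three_mul_le (t := t) hS hk3 r
  rw [Finset.card_range] at hsum
  simp only [EditTrace.costWithin]
  omega

theorem two_le_windowCost (hk : 1 ≤ k) (hG : IsBicliqueUnion G) {i : ℕ} (hi : i % 3 ≠ 2)
    (hdet : t.HasDetachedCopy S (x i)) : 2 ≤ t.windowCost x (3 * (i / 3) + (3 * k - 1)) := by
  obtain ⟨w, hw, hwi, hwS⟩ := hdet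
  set j := 3 * (i / 3) + (3 * k - 1) with hj
  have hshift {m : ℕ} (hm : m = i + 3 * k) : t.origin w = x m := by
    rw [hm, hx.apply_add_length, hwi]
  have havoid (a b z : ℕ) (hz : G.Adj w z) : t.origin z ≠ x a ∧ t.origin z ≠ x b :=
    ⟨fun h => hwS z hz (h ▸ hS a), fun h => hwS z hz (h ▸ hS b)⟩
  obtain h0 | h1 : i % 3 = 0 ∨ i % 3 = 1 := by omega
  · exact t.two_le_pathCost hG (hx.adj j) (hx.adj (j + 1)) (hx.adj (j + 2)) (hx.not_adj j) hw
      (hshift (by rw [hj]; omega)) (havoid _ _)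
  · rw [EditTrace.windowCost, ← t.pathCost_reverse]
    exact t.two_le_pathCost hG (G₀.symm _ _ (hx.adj (j + 2))) (G₀.symm _ _ (hx.adj (j + 1)))
      (G₀.symm _ _ (hx.adj j)) (mt (G₀.symm _ _) (hx.not_adj j)) hw (hshift (by rw [hj]; omega))
      (havoid _ _)

-- The windows starting at the positions `3 * j - 1` have as inner vertices the positions not
-- congruent to `2` modulo `3`, which is why their starts are shifted by `3 * k - 1`.
theorem add_card_detached_le_costWithin (hk : 2 ≤ k) (hG : IsBicliqueUnion G) {P : Finset ℕ}
    (hlt : ∀ i ∈ P, i < 3 * k) (hmod : ∀ i ∈ P, i % 3 ≠ 2)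
    (hdet : ∀ i ∈ P, t.HasDetachedCopy S (x i)) (hinj : Set.InjOn (· / 3) (P : Set ℕ))
    (hcard : 2 * P.card ≤ k) : k + P.card ≤ t.costWithin S := by
  rw [← Finset.card_image_of_injOn hinj] at hcard ⊢
  refine hx.add_card_le_costWithin hS hk hG (r := 3 * k - 1) ?_ ?_ hcard
  · simp only [Finset.image_subset_iff, Finset.mem_range]
    intro i hi
    have := hlt i hi
    omega
  · simp only [Finset.mem_image, forall_exists_index, and_imp, forall_apply_eq_imp_iff₂]
    exact fun i hi => hx.two_le_windowCost hS (by omega) hG (hmod i hi) (hdet i hi)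

end LongCycle

end Cycle

/-! ### The graph `G_F` -/

section Construction

variable {F : CNF3} {v w c c' i j : ℕ}

theorem cycVert_inj : cycVert v i = cycVert w j ↔ v = w ∧ i = j := by
  simp [cycVert]

theorem clVert_inj : clVert c = clVert c' ↔ c = c' := by
  simp [clVert]

theorem cycVert_ne_clVert : cycVert v i ≠ clVert c := by
  simp only [cycVert, clVert]
  omega

theorem occIndex_lt_occIndex (hv : OccIn F v c) (hc : c < c') :
    occIndex F v c < occIndex F v c' := by
  classical
  refine Finset.card_lt_card (Finset.ssubset_iff_of_subset ?_ |>.2 ⟨c, ?_, ?_⟩)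
  · exact Finset.filter_subset_filter _ (Finset.range_mono hc.le)
  · simp [hv, hc]
  · simp

theorem occIndex_lt_occCount (hv : OccIn F v c) (hc : c < F.m) : occIndex F v c < occCount F v :=
  occIndex_lt_occIndex hv hc

theorem occIndex_inj (hv : OccIn F v c) (hv' : OccIn F v c')
    (h : occIndex F v c = occIndex F v c') : c = c' := by
  by_contra hne
  obtain hlt | hlt := Nat.lt_or_gt_of_ne hne
  · exact (occIndex_lt_occIndex hv hlt).ne h
  · exact (occIndex_lt_occIndex hv' hlt).ne' h

theorem one_le_occCount (hv : OccIn F v c) (hc : c < F.m) : 1 ≤ occCount F v :=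
  Nat.one_le_of_lt (occIndex_lt_occCount hv hc)

theorem attachIdx_eq (F : CNF3) (v c : ℕ) :
    attachIdx F v c = 6 * occIndex F v c + 1 ∨ attachIdx F v c = 6 * occIndex F v c + 3 := by
  unfold attachIdx
  split_ifs <;> simp

theorem attachIdx_lt (hv : OccIn F v c) (hc : c < F.m) : attachIdx F v c < 6 * occCount F v := by
  have := occIndex_lt_occCount hv hc
  have := attachIdx_eq F v c
  omega

theorem attachIdx_lit_mod_three (hc : c < F.m) (l : Fin 3) :
    attachIdx F (F.lit c l).1 c % 3 = (F.lit c l).2.toNat := by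
  have hpos : PosIn F (F.lit c l).1 c ↔ (F.lit c l).2 = true := by
    refine ⟨fun ⟨i, hi⟩ => ?_, fun h => ⟨l, Prod.ext rfl h⟩⟩
    rw [← F.distinct c hc i l (hi ▸ rfl), hi]
  rw [attachIdx]
  split_ifs with h
  · rw [hpos.1 h, Bool.toNat_true]
    omega
  · rw [Bool.eq_false_iff.2 (mt hpos.2 h), Bool.toNat_false]
    omega

theorem occIn_lit (F : CNF3) (c : ℕ) (l : Fin 3) : OccIn F (F.lit c l).1 c := ⟨l, rfl⟩

/-- The vertex `v_i` of the cycle of the variable `v`, with `i` taken modulo the length of the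
cycle; `cycVert v i` is the same vertex only for `1 ≤ i ≤ 6 * occCount F v`. -/
noncomputable def cyclePt (F : CNF3) (v i : ℕ) : ℕ :=
  cycVert v ((i + 6 * occCount F v - 1) % (6 * occCount F v) + 1)

/-- The vertex `v_c` of the cycle of `v` that is joined to the clause vertex `c`. -/
noncomputable def attachVert (F : CNF3) (v c : ℕ) : ℕ := cyclePt F v (attachIdx F v c)

theorem cyclePt_succ (F : CNF3) (v i : ℕ) :
    cyclePt F v (i + 1) = cycVert v (i % (6 * occCount F v) + 1) := by
  rw [cyclePt, add_right_comm, Nat.add_sub_cancel, Nat.add_mod_right]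

theorem cycVert_eq_cyclePt (hi : 1 ≤ i) (hle : i ≤ 6 * occCount F v) :
    cycVert v i = cyclePt F v i := by
  obtain ⟨i, rfl⟩ := Nat.exists_eq_add_of_le' hi
  rw [cyclePt_succ, Nat.mod_eq_of_lt hle]

theorem cyclePt_eq_iff (hd : 1 ≤ occCount F v) :
    cyclePt F v i = cyclePt F w j ↔ v = w ∧ i ≡ j [MOD 6 * occCount F v] := by
  rw [cyclePt, cyclePt, cycVert_inj]
  refine and_congr_right fun h => ?_
  subst h
  rw [Nat.add_right_cancel_iff, Nat.add_sub_assoc (by omega), Nat.add_sub_assoc (by omega)]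
  exact ⟨Nat.ModEq.add_right_cancel' _, fun h => Nat.ModEq.add_right _ h⟩

theorem eq_of_cyclePt_eq (h : cyclePt F v i = cyclePt F w j) : v = w := (cycVert_inj.1 h).1

theorem cyclePt_ne_clVert : cyclePt F v i ≠ clVert c := cycVert_ne_clVert

theorem attachVert_inj (hv : OccIn F v c) (hc : c < F.m) (hw : OccIn F w c') (hc' : c' < F.m) :
    attachVert F v c = attachVert F w c' ↔ v = w ∧ c = c' := by
  refine ⟨fun h => ?_, fun ⟨hvw, hcc⟩ => by rw [hvw, hcc]⟩
  obtain ⟨rfl, hmod⟩ := (cyclePt_eq_iff (one_le_occCount hv hc)).1 h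
  refine ⟨rfl, occIndex_inj hv hw ?_⟩
  have := hmod.eq_of_lt_of_lt (attachIdx_lt hv hc) (attachIdx_lt hw hc')
  have := attachIdx_eq F v c
  have := attachIdx_eq F v c'
  omega

theorem adjF0_iff {x y : ℕ} : AdjF0 F x y ↔
    (∃ v i, 1 ≤ occCount F v ∧ x = cyclePt F v i ∧ y = cyclePt F v (i + 1)) ∨
    (∃ c < F.m, ∃ v, OccIn F v c ∧ x = clVert c ∧ y = attachVert F v c) := by
  refine or_congr ⟨?_, ?_⟩ ?_
  · rintro ⟨v, i, hi, hle, rfl, rfl⟩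
    exact ⟨v, i, by omega, cycVert_eq_cyclePt hi hle, (cyclePt_succ F v i).symm⟩
  · rintro ⟨v, i, hd, rfl, rfl⟩
    have hlt := Nat.mod_lt (i + 6 * occCount F v - 1) (show 0 < 6 * occCount F v by omega)
    refine ⟨v, _, by omega, hlt, rfl, ?_⟩
    rw [cyclePt_succ, Nat.succ_eq_add_one, Nat.mod_add_mod, Nat.sub_add_cancel (by omega),
      Nat.add_mod_right]
  · refine exists_congr fun c => and_congr_right fun hc => exists_congr fun v =>
      and_congr_right fun hv => ?_
    have := attachIdx_eq F v c
    rw [attachVert, cycVert_eq_cyclePt (by omega) (attachIdx_lt hv hc).le]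

theorem index_mod_two (hd : 1 ≤ occCount F v) (i : ℕ) :
    ((i + 6 * occCount F v - 1) % (6 * occCount F v) + 1) % 2 = i % 2 := by
  have : (i + 6 * occCount F v - 1) % (6 * occCount F v) % 2 = (i + 6 * occCount F v - 1) % 2 :=
    Nat.mod_mod_of_dvd _ ⟨3 * occCount F v, by ring⟩
  omega

theorem cyclePt_mem_A (hd : 1 ≤ occCount F v) (hi : i % 2 = 0) : cyclePt F v i ∈ AsetF F :=
  ⟨v, _, Nat.le_add_left .., Nat.mod_lt _ (by omega), (index_mod_two hd i).trans hi, rfl⟩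

theorem cyclePt_mem_B (hd : 1 ≤ occCount F v) (hi : i % 2 = 1) : cyclePt F v i ∈ BsetF F :=
  Or.inr ⟨v, _, Nat.le_add_left .., Nat.mod_lt _ (by omega), (index_mod_two hd i).trans hi, rfl⟩

theorem cyclePt_mem (hd : 1 ≤ occCount F v) (i : ℕ) : cyclePt F v i ∈ AsetF F ∪ BsetF F :=
  (Nat.mod_two_eq_zero_or_one i).imp (cyclePt_mem_A hd) (cyclePt_mem_B hd)

theorem attachVert_mem_B (hv : OccIn F v c) (hc : c < F.m) : attachVert F v c ∈ BsetF F := by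
  refine cyclePt_mem_B (one_le_occCount hv hc) ?_
  have := attachIdx_eq F v c
  omega

theorem disjoint_AsetF_BsetF (F : CNF3) : Disjoint (AsetF F) (BsetF F) := by
  rw [Set.disjoint_left]
  rintro x ⟨v, i, -, -, hi, rfl⟩ (⟨c, -, h⟩ | ⟨w, j, -, -, hj, h⟩)
  · exact cycVert_ne_clVert h
  · obtain ⟨-, rfl⟩ := cycVert_inj.1 h
    omega

variable {G : BGraph}

namespace IsGF

variable (hG : IsGF F G)
include hG

theorem adj_cyclePt (hd : 1 ≤ occCount F v) (i : ℕ) :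
    G.Adj (cyclePt F v i) (cyclePt F v (i + 1)) :=
  (hG.2.2 _ _).2 (Or.inl (adjF0_iff.2 (Or.inl ⟨v, i, hd, rfl, rfl⟩)))

theorem adj_clVert (hv : OccIn F v c) (hc : c < F.m) : G.Adj (clVert c) (attachVert F v c) :=
  (hG.2.2 _ _).2 (Or.inl (adjF0_iff.2 (Or.inr ⟨c, hc, v, hv, rfl, rfl⟩)))

theorem mem_verts {x y : ℕ} (h : G.Adj x y) : x ∈ verts G := by
  rw [verts, hG.1, hG.2.1]
  obtain h | h := (hG.2.2 x y).1 h <;>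
    obtain ⟨v, i, hd, rfl, rfl⟩ | ⟨c, hc, v, hv, rfl, rfl⟩ := adjF0_iff.1 h
  · exact cyclePt_mem hd i
  · exact Or.inr (Or.inl ⟨c, hc, rfl⟩)
  · exact cyclePt_mem hd (i + 1)
  · exact Or.inr (attachVert_mem_B hv hc)

theorem eq_attachVert_of_adj {y : ℕ} (h : G.Adj (clVert c) y) :
    c < F.m ∧ ∃ v, OccIn F v c ∧ y = attachVert F v c := by
  obtain h | h := (hG.2.2 _ y).1 h <;>
    obtain ⟨v, i, -, h₁, h₂⟩ | ⟨c', hc, v, hv, h₁, h₂⟩ := adjF0_iff.1 h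
  · exact absurd h₁.symm cyclePt_ne_clVert
  · obtain rfl := clVert_inj.1 h₁
    exact ⟨hc, v, hv, h₂⟩
  · exact absurd h₂.symm cyclePt_ne_clVert
  · exact absurd h₂.symm cyclePt_ne_clVert

theorem eq_and_modEq_of_adj (hd : 1 ≤ occCount F v)
    (h : G.Adj (cyclePt F v i) (cyclePt F w j)) :
    v = w ∧ (j ≡ i + 1 [MOD 6 * occCount F v] ∨ i ≡ j + 1 [MOD 6 * occCount F v]) := by
  obtain h | h := (hG.2.2 _ _).1 h <;>
    obtain ⟨u, k, hu, h₁, h₂⟩ | ⟨c, -, u, -, h₁, -⟩ := adjF0_iff.1 h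
  · obtain ⟨rfl, hik⟩ := (cyclePt_eq_iff hd).1 h₁
    obtain ⟨rfl, hjk⟩ := (cyclePt_eq_iff hd).1 h₂.symm
    exact ⟨rfl, Or.inl (hjk.symm.trans (hik.symm.add_right 1))⟩
  · exact absurd h₁ cyclePt_ne_clVert
  · obtain ⟨rfl, hik⟩ := (cyclePt_eq_iff hd).1 h₂
    obtain ⟨rfl, hjk⟩ := (cyclePt_eq_iff hd).1 h₁.symm
    exact ⟨rfl, Or.inr (hik.trans (hjk.add_right 1))⟩
  · exact absurd h₁ cyclePt_ne_clVert

theorem longCycle (hd : 1 ≤ occCount F v) :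
    LongCycle G (cyclePt F v) (3 * (2 * occCount F v)) := by
  rw [show 3 * (2 * occCount F v) = 6 * occCount F v by ring]
  refine ⟨fun i j => (cyclePt_eq_iff hd).trans (and_iff_right rfl), hG.adj_cyclePt hd,
    fun i hadj => ?_⟩
  obtain ⟨-, h | h⟩ := hG.eq_and_modEq_of_adj hd hadj
  · have := (Nat.ModEq.add_left_cancel' i h).eq_of_lt_of_lt (by omega) (by omega)
    omega
  · have := (Nat.ModEq.add_left_cancel' (c := i) (a := 0) (b := 4) h).eq_of_lt_of_lt
      (by omega) (by omega)
    omega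

end IsGF

end Construction

/-! ### Counting occurrences -/

section Occurrences

variable {F : CNF3} {v : ℕ}

/-- The variables occurring in `F`. -/
def occVars (F : CNF3) : Finset ℕ :=
  (Finset.range F.m ×ˢ Finset.univ).image fun p : ℕ × Fin 3 => (F.lit p.1 p.2).1

theorem mem_occVars : v ∈ occVars F ↔ ∃ c < F.m, OccIn F v c := by
  simp [occVars, OccIn]

theorem one_le_occCount_iff : 1 ≤ occCount F v ↔ v ∈ occVars F := by
  classical
  rw [occCount, Finset.one_le_card, Finset.filter_nonempty_iff, mem_occVars]
  simp only [Finset.mem_range]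

open Classical in
theorem sum_occVars (F : CNF3) (f : ℕ → ℕ → ℕ) :
    ∑ v ∈ occVars F, ∑ c ∈ Finset.range F.m with OccIn F v c, f v c =
      ∑ c ∈ Finset.range F.m, ∑ l : Fin 3, f (F.lit c l).1 c := by
  rw [Finset.sum_comm' (t' := Finset.range F.m)
    (s' := fun c => Finset.univ.image fun l : Fin 3 => (F.lit c l).1)]
  · refine Finset.sum_congr rfl fun c hc => Finset.sum_image fun l _ l' _ h => ?_
    exact F.distinct c (Finset.mem_range.1 hc) l l' h
  · intro v c
    simp only [Finset.mem_filter, mem_occVars, Finset.mem_image, Finset.mem_range,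
      Finset.mem_univ, true_and]
    exact ⟨fun ⟨_, hc, hv⟩ => ⟨hv, hc⟩, fun ⟨hv, hc⟩ => ⟨⟨c, hc, hv⟩, hc, hv⟩⟩

theorem sum_occCount (F : CNF3) : ∑ v ∈ occVars F, occCount F v = 3 * F.m := by
  classical
  have h := sum_occVars F fun _ _ => 1
  simpa [occCount, mul_comm] using h

end Occurrences

/-! ### The cost of a trace on `G_F` -/

section Cost

variable {F : CNF3} {G G' : BGraph} {v c : ℕ}

namespace EditTrace

/-- The number of recorded operations carried out on the cycle of the variable `v`. -/
noncomputable def cycleCost (t : EditTrace G G') (F : CNF3) (v : ℕ) : ℕ :=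
  t.costWithin (Set.range (cyclePt F v))

/-- Some copy of the attachment vertex `v_c` has lost contact with the cycle of `v`. -/
def ClauseDetached (t : EditTrace G G') (F : CNF3) (v c : ℕ) : Prop :=
  t.HasDetachedCopy (Set.range (cyclePt F v)) (attachVert F v c)

/-- The clauses whose attachment vertex on the cycle of `v` has a detached copy. -/
noncomputable def detachedClauses (t : EditTrace G G') (F : CNF3) (v : ℕ) : Finset ℕ := by
  classical exact (Finset.range F.m).filter fun c => OccIn F v c ∧ t.ClauseDetached F v c

variable {t : EditTrace G G'}

theorem mem_detachedClauses :
    c ∈ t.detachedClauses F v ↔ c < F.m ∧ OccIn F v c ∧ t.ClauseDetached F v c := by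
  classical rw [detachedClauses, Finset.mem_filter, Finset.mem_range]

theorem card_detachedClauses_le : (t.detachedClauses F v).card ≤ occCount F v := by
  classical
  refine Finset.card_le_card fun c hc => ?_
  obtain ⟨hc, hv, -⟩ := mem_detachedClauses.1 hc
  exact Finset.mem_filter.2 ⟨Finset.mem_range.2 hc, hv⟩

end EditTrace

namespace IsGF

variable {t : EditTrace G G'} (hG : IsGF F G) (hbi : IsBicliqueUnion G')
include hG hbi

theorem two_mul_occCount_add_le_cycleCost (hd : 1 ≤ occCount F v) :
    2 * occCount F v + (t.detachedClauses F v).card ≤ t.cycleCost F v := by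
  have hinj {c c' : ℕ} (hc : c ∈ t.detachedClauses F v) (hc' : c' ∈ t.detachedClauses F v)
      (h : attachIdx F v c / 3 = attachIdx F v c' / 3) : c = c' := by
    refine occIndex_inj (EditTrace.mem_detachedClauses.1 hc).2.1
      (EditTrace.mem_detachedClauses.1 hc').2.1 ?_
    have := attachIdx_eq F v c
    have := attachIdx_eq F v c'
    omega
  have hcard : ((t.detachedClauses F v).image (attachIdx F v)).card =
      (t.detachedClauses F v).card :=
    Finset.card_image_of_injOn fun c hc c' hc' h => hinj hc hc' (congrArg (· / 3) h)
  have hle := t.card_detachedClauses_le (F := F) (v := v)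
  rw [← hcard] at hle ⊢
  refine (hG.longCycle hd).add_card_detached_le_costWithin Set.mem_range_self (by omega) hbi
    ?_ ?_ ?_ ?_ (by omega)
  · intro i hi
    obtain ⟨c, hc, rfl⟩ := Finset.mem_image.1 hi
    have := attachIdx_lt (EditTrace.mem_detachedClauses.1 hc).2.1
      (EditTrace.mem_detachedClauses.1 hc).1
    omega
  · intro i hi
    obtain ⟨c, -, rfl⟩ := Finset.mem_image.1 hi
    have := attachIdx_eq F v c
    omega
  · intro i hi
    obtain ⟨c, hc, rfl⟩ := Finset.mem_image.1 hi
    exact (EditTrace.mem_detachedClauses.1 hc).2.2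
  · rw [Finset.coe_image]
    exact Set.InjOn.image_of_comp fun c hc c' hc' h => hinj hc hc' h

end IsGF

/-- The vertex joined to the clause vertex `c` on account of the `l`-th literal of `c`. -/
noncomputable def litVert (F : CNF3) (c : ℕ) (l : Fin 3) : ℕ := attachVert F (F.lit c l).1 c

theorem litVert_inj {c c' : ℕ} {l l' : Fin 3} (hc : c < F.m) (hc' : c' < F.m) :
    litVert F c l = litVert F c' l' ↔ c = c' ∧ l = l' := by
  rw [litVert, litVert, attachVert_inj (occIn_lit F c l) hc (occIn_lit F c' l') hc']
  refine ⟨?_, by rintro ⟨rfl, rfl⟩; exact ⟨rfl, rfl⟩⟩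
  rintro ⟨h, rfl⟩
  exact ⟨rfl, F.distinct c hc l l' h⟩

theorem litVert_mem_B (hc : c < F.m) (l : Fin 3) : litVert F c l ∈ BsetF F :=
  attachVert_mem_B (occIn_lit F c l) hc

theorem IsGF.adj_litVert (hG : IsGF F G) (hc : c < F.m) (l : Fin 3) :
    G.Adj (clVert c) (litVert F c l) :=
  hG.adj_clVert (occIn_lit F c l) hc

theorem eq_of_mem_range_cyclePt {w z : ℕ} (hv : z ∈ Set.range (cyclePt F v))
    (hw : z ∈ Set.range (cyclePt F w)) : v = w := by
  obtain ⟨i, rfl⟩ := hv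
  obtain ⟨j, hj⟩ := hw
  exact (eq_of_cyclePt_eq hj).symm

theorem eq_of_forall_mem_range_cyclePt {w : ℕ} {e : Sym2 ℕ}
    (hv : ∀ z ∈ e, z ∈ Set.range (cyclePt F v)) (hw : ∀ z ∈ e, z ∈ Set.range (cyclePt F w)) :
    v = w :=
  eq_of_mem_range_cyclePt (hv _ (Sym2.out_fst_mem e)) (hw _ (Sym2.out_fst_mem e))

theorem clVert_notMem_range_cyclePt : clVert c ∉ Set.range (cyclePt F v) :=
  fun ⟨_, hi⟩ => cyclePt_ne_clVert hi

/-- `e` joins the attachment vertex of the `l`-th literal of `c` to the cycle of a variable other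
than that of this literal. -/
def IsForeignPair (F : CNF3) (c : ℕ) (l : Fin 3) (e : Sym2 ℕ) : Prop :=
  ∃ v i, v ≠ (F.lit c l).1 ∧ e = s(cyclePt F v i, litVert F c l)

theorem IsForeignPair.exists_notMem_range {l : Fin 3} {e : Sym2 ℕ} (h : IsForeignPair F c l e) :
    ∃ z ∈ e, z ∉ Set.range (cyclePt F v) := by
  obtain ⟨w, i, hw, rfl⟩ := h
  by_contra! hall
  obtain ⟨j, hj⟩ := hall _ (Sym2.mem_mk_left ..)
  obtain ⟨k, hk⟩ := hall _ (Sym2.mem_mk_right ..)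
  exact hw ((eq_of_cyclePt_eq hj).symm.trans (eq_of_cyclePt_eq hk))

namespace EditTrace

/-- The number of recorded additions of foreign pairs at the `l`-th literal of `c`. -/
noncomputable def foreignGained (t : EditTrace G G') (F : CNF3) (c : ℕ) (l : Fin 3) : ℕ := by
  classical exact (t.gained.filter (IsForeignPair F c l)).card

/-- The number of recorded operations charged to the clause `c`. -/
noncomputable def clauseCost (t : EditTrace G G') (F : CNF3) (c : ℕ) : ℕ :=
  t.splits (clVert c) + (t.lost.filter fun e => ∃ l, e = s(clVert c, litVert F c l)).card +
    ∑ l, t.foreignGained F c l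

/-- The literals of `c` whose attachment vertex has a copy detached from its cycle. -/
noncomputable def detachedLits (t : EditTrace G G') (F : CNF3) (c : ℕ) : Finset (Fin 3) := by
  classical exact Finset.univ.filter fun l => t.ClauseDetached F (F.lit c l).1 c

variable (t : EditTrace G G')

theorem sum_card_detachedClauses : ∑ v ∈ occVars F, (t.detachedClauses F v).card =
    ∑ c ∈ Finset.range F.m, (t.detachedLits F c).card := by
  classical
  have h := sum_occVars F fun v c => if t.ClauseDetached F v c then 1 else 0
  simpa only [← Finset.card_filter, Finset.filter_filter, detachedClauses, detachedLits] using h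

theorem sum_lostAt_litVert_le (hc : c < F.m) : ∑ l, t.lostAt (clVert c) (litVert F c l) ≤
    (t.lost.filter fun e => ∃ l, e = s(clVert c, litVert F c l)).card := by
  simp only [lostAt, ← Finset.card_filter]
  refine Finset.card_le_card_of_injOn (fun l => s(clVert c, litVert F c l)) ?_ ?_
  · intro l hl
    exact Finset.mem_filter.2 ⟨(Finset.mem_filter.1 hl).2, l, rfl⟩
  · exact fun l _ l' _ h => ((litVert_inj hc hc).1 (Sym2.congr_right.1 h)).2

theorem notMem_gained_of_mem_B (hG : IsGF F G) {x y : ℕ} (hx : x ∈ BsetF F) (hy : y ∈ BsetF F) :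
    s(x, y) ∉ t.gained := by
  intro h
  obtain ⟨hA, -⟩ | ⟨-, hA⟩ := t.gained_sides x y h
  · exact Set.disjoint_left.1 (disjoint_AsetF_BsetF F) (hG.1 ▸ hA) hx
  · exact Set.disjoint_left.1 (disjoint_AsetF_BsetF F) (hG.1 ▸ hA) hy

variable {t} in
theorem eq_of_isForeignPair (hG : IsGF F G) {c' : ℕ} {l l' : Fin 3} {e : Sym2 ℕ}
    (hc : c < F.m) (hc' : c' < F.m) (he : e ∈ t.gained)
    (h : IsForeignPair F c l e) (h' : IsForeignPair F c' l' e) : c = c' ∧ l = l' := by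
  obtain ⟨v, i, -, rfl⟩ := h
  obtain ⟨w, j, -, heq⟩ := h'
  obtain ⟨-, h⟩ | ⟨-, h⟩ := Sym2.eq_iff.1 heq
  · exact (litVert_inj hc hc').1 h
  · rw [heq, ← h] at he
    exact (t.notMem_gained_of_mem_B hG (litVert_mem_B hc l) (litVert_mem_B hc' l') he).elim

theorem sum_created_le [∀ v, DecidablePred (t.origin · ∈ Set.range (cyclePt F v))] :
    ∑ v ∈ occVars F, (t.created.filter (t.origin · ∈ Set.range (cyclePt F v))).card +
      ∑ c ∈ Finset.range F.m, t.splits (clVert c) ≤ t.created.card :=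
  sum_card_filter_add_sum_card_filter_le _ _ _ _ _
    (fun _ _ _ _ _ _ => eq_of_mem_range_cyclePt)
    (fun _ _ _ _ _ _ h h' => clVert_inj.1 (h.symm.trans h'))
    (fun _ _ _ _ _ _ hv h => clVert_notMem_range_cyclePt (h ▸ hv))

theorem sum_lost_le [∀ c, DecidablePred fun e => ∃ l, e = s(clVert c, litVert F c l)] :
    ∑ v ∈ occVars F, (within (Set.range (cyclePt F v)) t.lost).card +
      ∑ c ∈ Finset.range F.m,
        (t.lost.filter fun e => ∃ l, e = s(clVert c, litVert F c l)).card ≤ t.lost.card := by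
  classical
  refine sum_card_filter_add_sum_card_filter_le _ _ _ _ _
    (fun _ _ _ _ _ _ => eq_of_forall_mem_range_cyclePt) ?_ ?_
  · rintro e - c - c' - ⟨l, rfl⟩ ⟨l', h⟩
    obtain ⟨h, -⟩ | ⟨h, -⟩ := Sym2.eq_iff.1 h
    · exact clVert_inj.1 h
    · exact (cyclePt_ne_clVert h.symm).elim
  · rintro e - v - c - hv ⟨l, rfl⟩
    exact clVert_notMem_range_cyclePt (hv _ (Sym2.mem_mk_left ..))

theorem sum_gained_le (hG : IsGF F G) :
    ∑ v ∈ occVars F, (within (Set.range (cyclePt F v)) t.gained).card +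
      ∑ c ∈ Finset.range F.m, ∑ l, t.foreignGained F c l ≤ t.gained.card := by
  classical
  rw [← Finset.sum_product']
  refine sum_card_filter_add_sum_card_filter_le _ _ _ _ _
    (fun _ _ _ _ _ _ => eq_of_forall_mem_range_cyclePt) ?_ ?_
  · rintro e he ⟨c, l⟩ hc ⟨c', l'⟩ hc' h h'
    simp only [Finset.mem_product, Finset.mem_range, Finset.mem_univ, and_true] at hc hc'
    exact Prod.ext_iff.2 (eq_of_isForeignPair hG hc hc' he h h')
  · intro e _ v _ p _ hv h
    obtain ⟨z, hz, hzv⟩ := h.exists_notMem_range (v := v)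
    exact hzv (hv z hz)

theorem sum_cycleCost_add_sum_clauseCost_le (hG : IsGF F G) :
    ∑ v ∈ occVars F, t.cycleCost F v + ∑ c ∈ Finset.range F.m, t.clauseCost F c ≤ t.cost := by
  classical
  have hcreated := t.sum_created_le (F := F)
  have hlost := t.sum_lost_le (F := F)
  have hgained := t.sum_gained_le hG
  simp only [cycleCost, costWithin, clauseCost, cost, Finset.sum_add_distrib]
  omega

end EditTrace

namespace IsGF

variable {t : EditTrace G G'} (hG : IsGF F G) (hbi : IsBicliqueUnion G')
include hG hbi

theorem one_le_foreignGained (hc : c < F.m) {l k : Fin 3} (hlk : l ≠ k) {x y z : ℕ}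
    (hxy : G'.Adj x y) (hxz : G'.Adj x z) (hy : t.origin y = litVert F c l)
    (hz : t.origin z = litVert F c k) (hl : l ∉ t.detachedLits F c) :
    1 ≤ t.foreignGained F c k := by
  classical
  have hattached : ¬ t.ClauseDetached F (F.lit c l).1 c :=
    fun h => hl (Finset.mem_filter.2 ⟨Finset.mem_univ _, h⟩)
  simp only [EditTrace.ClauseDetached, EditTrace.HasDetachedCopy] at hattached
  push Not at hattached
  obtain ⟨u, hyu, i, hi⟩ := hattached y (t.mem_verts_right hxy) hy
  have hvar : (F.lit c l).1 ≠ (F.lit c k).1 := fun h => hlk (F.distinct c hc l k h)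
  have huz : G'.Adj u z := hbi _ _ _ _ (G'.symm _ _ hyu) (G'.symm _ _ hxy) hxz
  have hgained := (t.adj_or_gained u z huz).resolve_left fun hadj => by
    rw [hz, ← hi] at hadj
    exact hvar (hG.eq_and_modEq_of_adj (one_le_occCount (occIn_lit F c l) hc) hadj).1
  rw [hz] at hgained
  exact Finset.card_pos.2 ⟨_, Finset.mem_filter.2 ⟨hgained, _, i, hvar, by rw [hi]⟩⟩

theorem two_le_clauseCost_add (hc : c < F.m) :
    2 ≤ t.clauseCost F c + ((t.detachedLits F c).card - 1) := by
  classical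
  set R : Finset (Fin 3) := {l | t.lostAt (clVert c) (litVert F c l) = 0} with hR
  have hcopies (l : Fin 3) (hl : t.lostAt (clVert c) (litVert F c l) = 0) :=
    t.exists_adj_of_lostAt_eq_zero (hG.adj_litVert hc l) hl
  choose! x y hx hy hxy using hcopies
  have hkept : R.card ≤ (R.image x).card +
      (Finset.univ.filter fun k => 1 ≤ t.foreignGained F c k).card +
      ((t.detachedLits F c).card - 1) := by
    refine card_le_card_image_add fun l hl k hk hlk hcopy hdet => ?_
    obtain ⟨-, hl⟩ := Finset.mem_filter.1 hl
    obtain ⟨-, hk⟩ := Finset.mem_filter.1 hk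
    exact Finset.mem_filter.2 ⟨Finset.mem_univ _, hG.one_le_foreignGained hbi hc hlk (hxy l hl)
      (hcopy ▸ hxy k hk) (hy l hl) (hy k hk) hdet⟩
  have hcenters : (R.image x).card ≤ t.splits (clVert c) + 1 := by
    refine t.card_copies_le fun z hz => ?_
    obtain ⟨l, hl, rfl⟩ := Finset.mem_image.1 hz
    obtain ⟨-, hl⟩ := Finset.mem_filter.1 hl
    exact ⟨t.mem_verts _ _ (hxy l hl), hx l hl⟩
  have hforeign : (Finset.univ.filter fun k => 1 ≤ t.foreignGained F c k).card ≤
      ∑ k, t.foreignGained F c k := by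
    rw [Finset.card_filter]
    exact Finset.sum_le_sum fun k _ => by split_ifs <;> omega
  have htotal : 3 ≤ R.card + ∑ l, t.lostAt (clVert c) (litVert F c l) := by
    rw [hR, Finset.card_filter, ← Finset.sum_add_distrib]
    calc 3 = ∑ _l : Fin 3, 1 := by simp
      _ ≤ _ := Finset.sum_le_sum fun l _ => by split_ifs <;> omega
  have hlost := t.sum_lostAt_litVert_le hc
  rw [EditTrace.clauseCost]
  omega

theorem cycleCost_le_and_clauseCost_le (hcost : t.cost ≤ 8 * F.m) :
    (∀ v ∈ occVars F, t.cycleCost F v ≤ 2 * occCount F v) ∧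
      ∀ c < F.m, t.clauseCost F c ≤ 2 := by
  have hcycle : ∀ v ∈ occVars F, 2 * occCount F v + (t.detachedClauses F v).card ≤
      t.cycleCost F v :=
    fun v hv => hG.two_mul_occCount_add_le_cycleCost hbi (one_le_occCount_iff.2 hv)
  have hclause : ∀ c ∈ Finset.range F.m, 2 ≤ t.clauseCost F c + (t.detachedLits F c).card :=
    fun c hc => (hG.two_le_clauseCost_add hbi (Finset.mem_range.1 hc)).trans
      (Nat.add_le_add_left (Nat.sub_le ..) _)
  have hcycles := Finset.sum_le_sum hcycle
  have hclauses := Finset.sum_le_sum hclause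
  have hsum := t.sum_cycleCost_add_sum_clauseCost_le hG
  have hdetached := t.sum_card_detachedClauses (F := F)
  have hocc := sum_occCount F
  simp only [Finset.sum_add_distrib, ← Finset.mul_sum, Finset.sum_const, Finset.card_range,
    smul_eq_mul] at hcycles hclauses
  have hclause_eq := (Finset.sum_eq_sum_iff_of_le hclause).1 (by
    simp only [Finset.sum_add_distrib, Finset.sum_const, Finset.card_range, smul_eq_mul]
    omega)
  have hcycle_eq := (Finset.sum_eq_sum_iff_of_le hcycle).1 (by
    simp only [Finset.sum_add_distrib, ← Finset.mul_sum]
    omega)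
  -- Each detached vertex costs an extra operation on its cycle, but the first one at a clause saves
  -- nothing there.
  have hempty : ∀ c ∈ Finset.range F.m, (t.detachedLits F c).card = 0 := fun c hc => by
    have := hG.two_le_clauseCost_add (t := t) hbi (Finset.mem_range.1 hc)
    have := hclause_eq c hc
    omega
  rw [Finset.sum_eq_zero hempty, Finset.sum_eq_zero_iff] at hdetached
  refine ⟨fun v hv => ?_, fun c hc => ?_⟩
  · have := hcycle_eq v hv
    have := hdetached v hv
    omega
  · have := hclause_eq c (Finset.mem_range.2 hc)
    omega

end IsGF

end Cost

/-! ### A cheap solution satisfies the formula -/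

section Satisfiable

namespace LongCycle

variable {G₀ G : BGraph} {t : EditTrace G₀ G} {x : ℕ → ℕ} {k : ℕ} {S : Set ℕ}
  (hx : LongCycle G₀ x (3 * k)) (hS : ∀ i, x i ∈ S) (hk : 1 ≤ k) (hG : IsBicliqueUnion G)
  (hcost : t.costWithin S ≤ k)
include hx hS hk hG hcost

theorem lostAt_add_lostAt_add_lostAt (i : ℕ) : t.lostAt (x i) (x (i + 1)) +
    t.lostAt (x (i + 1)) (x (i + 2)) + t.lostAt (x (i + 2)) (x (i + 3)) = 1 := by
  have h₀ := hx.splits_gainedAt_windowCost_of_costWithin_le hS hk hG hcost i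
  have h₁ := hx.splits_gainedAt_windowCost_of_costWithin_le hS hk hG hcost (i + 1)
  have h₂ := hx.splits_gainedAt_windowCost_of_costWithin_le hS hk hG hcost (i + 2)
  rw [EditTrace.windowCost, EditTrace.pathCost] at h₀
  omega

theorem lostAt_periodic : Function.Periodic (fun i => t.lostAt (x i) (x (i + 1))) 3 := by
  intro i
  have h₀ := hx.lostAt_add_lostAt_add_lostAt hS hk hG hcost i
  have h₁ := hx.lostAt_add_lostAt_add_lostAt hS hk hG hcost (i + 1)
  simp only [add_assoc, Nat.reduceAdd] at h₀ h₁ ⊢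
  omega

theorem lostAt_of_pendant_edge {z i : ℕ} (hz : G₀.Adj z (x (i + 2)))
    (hkept : t.lostAt z (x (i + 2)) = 0)
    (hleft : ¬ G₀.Adj z (x i)) (hleft_gained : t.gainedAt z (x i) = 0)
    (hright : ¬ G₀.Adj z (x (i + 4))) (hright_gained : t.gainedAt z (x (i + 4)) = 0) :
    t.lostAt (x (i + 3)) (x (i + 4)) = 1 := by
  have hsplits (j : ℕ) : t.splits (x j) = 0 :=
    (hx.splits_gainedAt_windowCost_of_costWithin_le hS hk hG hcost j).1
  have hforward := t.one_le_pathCost hG hz (hx.adj (i + 2)) (hx.adj (i + 3)) hright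
  have hbackward := t.one_le_pathCost hG hz (G₀.symm _ _ (hx.adj (i + 1)))
    (G₀.symm _ _ (hx.adj i)) hleft
  simp only [EditTrace.pathCost, hsplits, hkept, hleft_gained, hright_gained,
    t.lostAt_comm (x (i + 2)) (x (i + 1)), t.lostAt_comm (x (i + 1)) (x i)] at hforward hbackward
  have h₀ := hx.lostAt_add_lostAt_add_lostAt hS hk hG hcost i
  have h₁ := hx.lostAt_add_lostAt_add_lostAt hS hk hG hcost (i + 1)
  simp only [add_assoc, Nat.reduceAdd] at h₀ h₁ hforward hbackward
  omega

end LongCycle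

variable {F : CNF3} {G G' : BGraph} {v c i : ℕ} {t : EditTrace G G'}

theorem clVert_mem_B (hc : c < F.m) : clVert c ∈ BsetF F := Or.inl ⟨c, hc, rfl⟩

namespace IsGF

variable (hG : IsGF F G)
include hG

theorem cyclePt_eq_attachVert_of_adj (hd : 1 ≤ occCount F v)
    (h : G.Adj (clVert c) (cyclePt F v i)) : cyclePt F v i = attachVert F v c := by
  obtain ⟨-, w, -, hw⟩ := hG.eq_attachVert_of_adj h
  obtain ⟨rfl, -⟩ := (cyclePt_eq_iff hd).1 hw
  exact hw

variable (hbi : IsBicliqueUnion G')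
include hbi

theorem lostAt_cyclePt_attachIdx_succ (hv : OccIn F v c) (hc : c < F.m)
    (hcost : t.cycleCost F v ≤ 2 * occCount F v)
    (hkept : t.lostAt (clVert c) (attachVert F v c) = 0) :
    t.lostAt (cyclePt F v (attachIdx F v c + 1)) (cyclePt F v (attachIdx F v c + 2)) = 1 := by
  have hd : 1 ≤ occCount F v := one_le_occCount hv hc
  have hx := hG.longCycle hd
  obtain ⟨i, hi⟩ : ∃ i, i + 2 = attachIdx F v c + 3 * (2 * occCount F v) :=
    ⟨attachIdx F v c + 3 * (2 * occCount F v) - 2, by omega⟩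
  have hattach : attachVert F v c = cyclePt F v (i + 2) := by
    rw [hi, hx.apply_add_length, attachVert]
  have hodd : i % 2 = 1 := by have := attachIdx_eq F v c; omega
  have hdvd : ¬ 3 * (2 * occCount F v) ∣ 2 := fun h => by linarith [Nat.le_of_dvd two_pos h]
  have hleft : ¬ G.Adj (clVert c) (cyclePt F v i) := fun h =>
    hx.apply_ne_apply_add hdvd i ((hG.cyclePt_eq_attachVert_of_adj hd h).trans hattach)
  have hright : ¬ G.Adj (clVert c) (cyclePt F v (i + 4)) := fun h =>
    hx.apply_ne_apply_add hdvd (i + 2) ((hG.cyclePt_eq_attachVert_of_adj hd h).trans hattach).symm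
  have hgained {j : ℕ} (hj : j % 2 = 1) : t.gainedAt (clVert c) (cyclePt F v j) = 0 :=
    if_neg (t.notMem_gained_of_mem_B hG (clVert_mem_B hc) (cyclePt_mem_B hd hj))
  have hlost := hx.lostAt_of_pendant_edge Set.mem_range_self (by omega) hbi hcost
    (hattach ▸ hG.adj_clVert hv hc) (hattach ▸ hkept) hleft (hgained hodd) hright
    (hgained (by omega))
  rwa [show i + 3 = attachIdx F v c + 1 + 3 * (2 * occCount F v) by omega,
    show i + 4 = attachIdx F v c + 2 + 3 * (2 * occCount F v) by omega, hx.apply_add_length,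
    hx.apply_add_length] at hlost

theorem lostAt_cyclePt_of_lostAt_litVert (hc : c < F.m) {l : Fin 3}
    (hcost : t.cycleCost F (F.lit c l).1 ≤ 2 * occCount F (F.lit c l).1)
    (hkept : t.lostAt (clVert c) (litVert F c l) = 0) :
    t.lostAt (cyclePt F (F.lit c l).1 ((F.lit c l).2.toNat + 1))
      (cyclePt F (F.lit c l).1 ((F.lit c l).2.toNat + 2)) = 1 := by
  have hd := one_le_occCount (occIn_lit F c l) hc
  have hperiodic := (hG.longCycle hd).lostAt_periodic (t := t) Set.mem_range_self (by omega) hbi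
    hcost
  have hmod : (attachIdx F (F.lit c l).1 c + 1) % 3 = (F.lit c l).2.toNat + 1 := by
    have := attachIdx_lit_mod_three hc l
    have := (F.lit c l).2.toNat_lt
    omega
  have hlost := hperiodic.map_mod_nat (attachIdx F (F.lit c l).1 c + 1)
  rw [hmod] at hlost
  exact hlost.trans (hG.lostAt_cyclePt_attachIdx_succ hbi (occIn_lit F c l) hc hcost hkept)

theorem satisfiable_of_cost_le (hcost : t.cost ≤ 8 * F.m) : Satisfiable F := by
  obtain ⟨hcycle, hclause⟩ := hG.cycleCost_le_and_clauseCost_le hbi hcost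
  refine ⟨fun v => decide (t.lostAt (cyclePt F v 2) (cyclePt F v 3) = 1), fun c hc => ?_⟩
  obtain ⟨l, hkept⟩ : ∃ l, t.lostAt (clVert c) (litVert F c l) = 0 := by
    by_contra! hall
    have hlost := t.sum_lostAt_litVert_le hc
    have hthree : ∑ _l : Fin 3, 1 ≤ ∑ l, t.lostAt (clVert c) (litVert F c l) :=
      Finset.sum_le_sum fun l _ => Nat.one_le_iff_ne_zero.2 (hall l)
    have := hclause c hc
    rw [Fin.sum_const, smul_eq_mul] at hthree
    rw [EditTrace.clauseCost] at this
    omega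
  have hv : (F.lit c l).1 ∈ occVars F := mem_occVars.2 ⟨c, hc, occIn_lit F c l⟩
  have hlost := hG.lostAt_cyclePt_of_lostAt_litVert hbi hc (hcycle _ hv) hkept
  refine ⟨l, ?_⟩
  have hd := one_le_occCount_iff.2 hv
  cases hsign : (F.lit c l).2
  · have hone := (hG.longCycle hd).lostAt_add_lostAt_add_lostAt Set.mem_range_self (by omega) hbi
      (hcycle _ hv) 1
    rw [hsign] at hlost
    simp only [Bool.toNat_false, zero_add, Nat.reduceAdd] at hlost hone
    exact decide_eq_false (by omega)
  · rw [hsign] at hlost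
    exact decide_eq_true hlost

end IsGF

end Satisfiable

/-! ### Cutting the graph along a satisfying assignment -/

section Cut

variable {F : CNF3} {G H : BGraph} {v c i : ℕ}

theorem exists_applySeq_deletions (sA sB : Bool) {D : Finset (Sym2 ℕ)}
    (hD : ∀ x y, s(x, y) ∈ D → G.Adj x y) : ∃ L H, L.length = D.card ∧ ApplySeq sA sB L G H ∧
      ∀ x y, H.Adj x y ↔ G.Adj x y ∧ s(x, y) ∉ D := by
  induction D using Finset.induction_on generalizing G with
  | empty => exact ⟨[], G, rfl, rfl, by simp⟩
  | insert e D he ih =>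
    induction e with | h u v => ?_
    let G₁ : BGraph :=
      { G with
        Adj := fun x y => G.Adj x y ∧ ¬((x = u ∧ y = v) ∨ (x = v ∧ y = u))
        symm := fun x y h => ⟨G.symm _ _ h.1, fun h' => h.2 (by tauto)⟩ }
    have hD₁ (x y : ℕ) (hxy : s(x, y) ∈ D) : G₁.Adj x y :=
      ⟨hD x y (Finset.mem_insert_of_mem hxy), fun h => he (Sym2.eq_iff.2 h ▸ hxy)⟩
    obtain ⟨L, H, hL, hseq, hadj⟩ := ih hD₁
    refine ⟨Op.del u v :: L, H, by rw [List.length_cons, hL, Finset.card_insert_of_notMem he],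
      ⟨G₁, .del (hD u v (Finset.mem_insert_self _ _)) rfl rfl fun _ _ => Iff.rfl, hseq⟩,
      fun x y => ?_⟩
    rw [hadj, Finset.mem_insert, Sym2.eq_iff]
    tauto

theorem isBicliqueUnion_of_leaf
    (h : ∀ x y, G.Adj x y → (nbhd G x).Subsingleton ∨ (nbhd G y).Subsingleton) :
    IsBicliqueUnion G := by
  intro a b c d hab hbc hcd
  obtain h | h := h b c hbc
  · exact h (G.symm _ _ hab) hbc ▸ hcd
  · exact h hcd (G.symm _ _ hbc) ▸ hab

/-- The deleted edges of the cycles: every third one, the phase being chosen such that the star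
centres left on the cycle of `v` include the attachment vertices of the literals of `v` that are
true under `σ`. -/
noncomputable def cycleCut (F : CNF3) (σ : ℕ → Bool) : Finset (Sym2 ℕ) :=
  (occVars F).biUnion fun v => (Finset.range (2 * occCount F v)).image fun k =>
    s(cyclePt F v (3 * k + (σ v).toNat + 1), cyclePt F v (3 * k + (σ v).toNat + 2))

/-- The deleted edges at the clause vertices, the `j c`-th literal of each clause `c` being
kept. -/
noncomputable def clauseCut (F : CNF3) (j : ℕ → Fin 3) : Finset (Sym2 ℕ) :=
  (Finset.range F.m).biUnion fun c =>
    (Finset.univ.erase (j c)).image fun l => s(clVert c, litVert F c l)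

variable {σ : ℕ → Bool} {j : ℕ → Fin 3}

theorem card_cycleCut_le (F : CNF3) (σ : ℕ → Bool) : (cycleCut F σ).card ≤ 6 * F.m :=
  calc (cycleCut F σ).card ≤ ∑ v ∈ occVars F, 2 * occCount F v :=
        Finset.card_biUnion_le.trans <| Finset.sum_le_sum fun v _ =>
          Finset.card_image_le.trans (Finset.card_range _).le
    _ = 6 * F.m := by rw [← Finset.mul_sum, sum_occCount]; ring

theorem card_clauseCut_le (F : CNF3) (j : ℕ → Fin 3) : (clauseCut F j).card ≤ 2 * F.m :=
  calc (clauseCut F j).card ≤ ∑ _c ∈ Finset.range F.m, 2 :=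
        Finset.card_biUnion_le.trans <| Finset.sum_le_sum fun c _ =>
          Finset.card_image_le.trans (by simp)
    _ = 2 * F.m := by rw [Finset.sum_const, Finset.card_range, smul_eq_mul, mul_comm]

theorem mk_cyclePt_mem_cycleCut (hd : 1 ≤ occCount F v) (hi : i % 3 = (σ v).toNat + 1) :
    s(cyclePt F v i, cyclePt F v (i + 1)) ∈ cycleCut F σ := by
  have hlt := Nat.mod_lt i (show 6 * occCount F v > 0 by omega)
  have hmod : i % (6 * occCount F v) % 3 = i % 3 :=
    Nat.mod_mod_of_dvd _ ⟨2 * occCount F v, by ring⟩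
  refine Finset.mem_biUnion.2 ⟨v, one_le_occCount_iff.1 hd, Finset.mem_image.2
    ⟨i % (6 * occCount F v) / 3, Finset.mem_range.2 (by omega), ?_⟩⟩
  have hk : 3 * (i % (6 * occCount F v) / 3) + (σ v).toNat + 1 = i % (6 * occCount F v) := by omega
  have hmodEq : 3 * (i % (6 * occCount F v) / 3) + (σ v).toNat + 1 ≡ i [MOD 6 * occCount F v] := by
    rw [hk]
    exact Nat.mod_modEq _ _
  exact Sym2.eq_iff.2 (Or.inl ⟨(cyclePt_eq_iff hd).2 ⟨rfl, hmodEq⟩,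
    (cyclePt_eq_iff hd).2 ⟨rfl, hmodEq.add_right 1⟩⟩)

namespace IsGF

variable (hG : IsGF F G)
include hG

theorem adj_of_mem_cut {x y : ℕ} (h : s(x, y) ∈ cycleCut F σ ∪ clauseCut F j) : G.Adj x y := by
  have hmk {u v : ℕ} (huv : G.Adj u v) (h : s(u, v) = s(x, y)) : G.Adj x y := by
    obtain ⟨rfl, rfl⟩ | ⟨rfl, rfl⟩ := Sym2.eq_iff.1 h
    exacts [huv, G.symm _ _ huv]
  simp only [cycleCut, clauseCut, Finset.mem_union, Finset.mem_biUnion, Finset.mem_image,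
    Finset.mem_range] at h
  obtain ⟨v, hv, k, -, h⟩ | ⟨c, hc, l, -, h⟩ := h
  · exact hmk (hG.adj_cyclePt (one_le_occCount_iff.2 hv) _) h
  · exact hmk (hG.adj_litVert hc l) h

theorem eq_or_of_adj_cyclePt_succ (hd : 1 ≤ occCount F v) {y : ℕ}
    (h : G.Adj (cyclePt F v (i + 1)) y) :
    y = cyclePt F v (i + 2) ∨ y = cyclePt F v i ∨ ∃ c < F.m, y = clVert c := by
  obtain h | h := (hG.2.2 _ _).1 h <;>
    obtain ⟨w, k, -, h₁, h₂⟩ | ⟨c, hc, w, -, h₁, -⟩ := adjF0_iff.1 h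
  · obtain ⟨rfl, hmod⟩ := (cyclePt_eq_iff hd).1 h₁
    exact Or.inl (h₂.trans ((cyclePt_eq_iff hd).2 ⟨rfl, hmod.add_right 1⟩).symm)
  · exact absurd h₁ cyclePt_ne_clVert
  · obtain ⟨rfl, hmod⟩ := (cyclePt_eq_iff hd).1 h₂
    exact Or.inr (Or.inl (h₁.trans
      ((cyclePt_eq_iff hd).2 ⟨rfl, Nat.ModEq.add_right_cancel' 1 hmod⟩).symm))
  · exact Or.inr (Or.inr ⟨c, hc, h₁⟩)

variable (hH : ∀ x y, H.Adj x y ↔ G.Adj x y ∧ s(x, y) ∉ cycleCut F σ ∪ clauseCut F j)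
include hH

theorem eq_litVert_of_adj_of_cut {y : ℕ} (h : H.Adj (clVert c) y) :
    c < F.m ∧ y = litVert F c (j c) := by
  obtain ⟨hadj, hcut⟩ := (hH _ _).1 h
  obtain ⟨hc, v, ⟨l, rfl⟩, rfl⟩ := hG.eq_attachVert_of_adj hadj
  refine ⟨hc, ?_⟩
  by_contra hne
  have hl : l ≠ j c := fun h => hne (h ▸ rfl)
  exact hcut (Finset.mem_union_right _ (Finset.mem_biUnion.2 ⟨c, Finset.mem_range.2 hc,
    Finset.mem_image.2 ⟨l, Finset.mem_erase.2 ⟨hl, Finset.mem_univ _⟩, rfl⟩⟩))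

theorem subsingleton_nbhd_clVert : (nbhd H (clVert c)).Subsingleton := fun _ hy _ hz =>
  (hG.eq_litVert_of_adj_of_cut hH hy).2.trans (hG.eq_litVert_of_adj_of_cut hH hz).2.symm

variable (hσ : ∀ c < F.m, σ (F.lit c (j c)).1 = (F.lit c (j c)).2)
include hσ

theorem mod_three_eq_of_adj_clVert (hd : 1 ≤ occCount F v) (h : H.Adj (cyclePt F v i) (clVert c)) :
    i % 3 = (σ v).toNat := by
  obtain ⟨hc, heq⟩ := hG.eq_litVert_of_adj_of_cut hH (H.symm _ _ h)
  obtain ⟨rfl, hmod⟩ := (cyclePt_eq_iff hd).1 heq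
  rw [hσ c hc, ← attachIdx_lit_mod_three hc]
  exact hmod.of_dvd ⟨2 * occCount F (F.lit c (j c)).1, by ring⟩

theorem subsingleton_nbhd_cyclePt_succ (hd : 1 ≤ occCount F v) (hi : (i + 1) % 3 ≠ (σ v).toNat) :
    (nbhd H (cyclePt F v (i + 1))).Subsingleton := by
  have hright (h : H.Adj (cyclePt F v (i + 1)) (cyclePt F v (i + 2))) :
      (i + 1) % 3 ≠ (σ v).toNat + 1 := fun hmod =>
    ((hH _ _).1 h).2 (Finset.mem_union_left _ (mk_cyclePt_mem_cycleCut hd hmod))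
  have hleft (h : H.Adj (cyclePt F v (i + 1)) (cyclePt F v i)) : i % 3 ≠ (σ v).toNat + 1 :=
    fun hmod => ((hH _ _).1 (H.symm _ _ h)).2
      (Finset.mem_union_left _ (mk_cyclePt_mem_cycleCut hd hmod))
  have hnbhd {y : ℕ} (h : H.Adj (cyclePt F v (i + 1)) y) :
      y = cyclePt F v (i + 2) ∨ y = cyclePt F v i := by
    obtain rfl | rfl | ⟨c, -, rfl⟩ := hG.eq_or_of_adj_cyclePt_succ hd ((hH _ _).1 h).1
    exacts [Or.inl rfl, Or.inr rfl, absurd (hG.mod_three_eq_of_adj_clVert hH hσ hd h) hi]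
  have := (σ v).toNat_lt
  intro y hy z hz
  obtain rfl | rfl := hnbhd hy <;> obtain rfl | rfl := hnbhd hz
  · rfl
  · have := hright hy
    have := hleft hz
    omega
  · have := hright hz
    have := hleft hy
    omega
  · rfl

theorem subsingleton_nbhd_cyclePt (hd : 1 ≤ occCount F v) (hi : i % 3 ≠ (σ v).toNat) :
    (nbhd H (cyclePt F v i)).Subsingleton := by
  obtain ⟨k, hk⟩ : ∃ k, k + 1 = i + 3 * (2 * occCount F v) :=
    ⟨i + 3 * (2 * occCount F v) - 1, by omega⟩
  rw [← (hG.longCycle hd).apply_add_length, ← hk]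
  exact hG.subsingleton_nbhd_cyclePt_succ hH hσ hd (by omega)

theorem isBicliqueUnion_of_cut : IsBicliqueUnion H := by
  have hleaf {x y : ℕ} (h : AdjF0 F x y) :
      (nbhd H x).Subsingleton ∨ (nbhd H y).Subsingleton := by
    obtain ⟨v, i, hd, rfl, rfl⟩ | ⟨c, -, v, -, rfl, -⟩ := adjF0_iff.1 h
    · by_cases hi : i % 3 = (σ v).toNat
      · exact Or.inr (hG.subsingleton_nbhd_cyclePt hH hσ hd (by omega))
      · exact Or.inl (hG.subsingleton_nbhd_cyclePt hH hσ hd hi)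
    · exact Or.inl (hG.subsingleton_nbhd_clVert hH)
  refine isBicliqueUnion_of_leaf fun x y hxy => ?_
  obtain h | h := (hG.2.2 _ _).1 ((hH _ _).1 hxy).1
  exacts [hleaf h, (hleaf h).symm]

end IsGF

end Cut

theorem construction_correct_general (F : CNF3) (G : BGraph) (hG : IsGF F G) (sA sB : Bool) :
    (∃ L, L.length ≤ 8 * F.m ∧ Solves sA sB L G) ↔ Satisfiable F := by
  constructor
  · rintro ⟨L, hL, G', hseq, hbi⟩
    obtain ⟨t, ht⟩ := (EditTrace.refl fun x y => hG.mem_verts).exists_of_applySeq hseq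
    rw [EditTrace.cost_refl] at ht
    exact hG.satisfiable_of_cost_le hbi (t := t) (by omega)
  · rintro ⟨σ, hσ⟩
    choose! j hj using hσ
    obtain ⟨L, H, hL, hseq, hH⟩ := exists_applySeq_deletions sA sB
      fun x y => hG.adj_of_mem_cut (σ := σ) (j := j)
    have hcard := Finset.card_union_le (cycleCut F σ) (clauseCut F j)
    have hcycle := card_cycleCut_le F σ
    have hclause := card_clauseCut_le F j
    exact ⟨L, by omega, H, hseq, hG.isBicliqueUnion_of_cut hH hj⟩

/-- For a 3-CNF formula `F` with `m` clauses (three distinct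
variables per clause), the constructed graph `G_F` (with bipartition `(A,B)`,
`A` the even-indexed cycle vertices, `B` the odd-indexed cycle vertices and
the clause vertices) can be transformed into a disjoint union of bicliques by
at most `8m` edge editions and vertex splittings iff `F` is satisfiable; and
the same holds when vertex splittings are allowed only on vertices of `B`
(and their copies). -/
theorem construction_correct (F : CNF3) (G : BGraph) (hG : IsGF F G) :
    ((∃ L, L.length ≤ 8 * F.m ∧ Solves true true L G) ↔ Satisfiable F) ∧
    ((∃ L, L.length ≤ 8 * F.m ∧ Solves false true L G) ↔ Satisfiable F) :=
  ⟨construction_correct_general F G hG true true, construction_correct_general F G hG false true⟩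

end BCE
end

section
/- Let T = (A, B, E) be a tree and let y be a cut vertex of T partitioning V(T) \ {y} into sets X and Y such that the subgraph induced by X ∪ {y} is a biclique, some vertex of X is at distance two from y, and |N(y) ∩ Y| = 1. Then bceovs(T, A) = 1 + bceovs(T[Y], A) and bcevs(T) = 1 + bcevs(T[Y]). -/
/- Upper bound: once the edge from `y` to its neighbour in `Y` is deleted, the rest of the graph is
already a union of bicliques, and a solution of `T[Y]` remains a solution beside it after renaming
the copies it creates. Lower bound: following the copies of the vertices of `Y` back to `Y`, every
solution of `T` restricts to a solution of `T[Y]`. Operations inside `Y` never destroy the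
obstruction formed by a walk `a - x - y` outside `Y` such that `y` has a neighbour in `Y` and `a`
has none, so some operation of the solution is not inside `Y` and is saved in the restriction. -/

namespace BCE

section

variable {sA sB : Bool} {op : Op} {L : List Op} {G G' H H' R : BGraph} {S : Set ℕ} {u v : ℕ}

@[ext]
theorem BGraph.ext (hA : G.A = H.A) (hB : G.B = H.B) (hAdj : G.Adj = H.Adj) : G = H := by
  cases G
  cases H
  congr

theorem finite_verts (G : BGraph) : (verts G).Finite :=
  G.finA.union G.finB

/-- Every edge of `G` joins two of its vertices, which the structure `BGraph` does not enforce.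
Only the first endpoint is mentioned, since adjacency is symmetric. -/
def IsSupported (G : BGraph) : Prop :=
  ∀ u v, G.Adj u v → u ∈ verts G

theorem IsSupported.right_mem (hG : IsSupported G) (h : G.Adj u v) : v ∈ verts G :=
  hG v u (G.symm u v h)

theorem Bipartite.isSupported (hG : Bipartite G) : IsSupported G :=
  fun u v h => (hG.2 u v h).imp And.left And.left

theorem IsSupported.induce (hG : IsSupported G) (S : Set ℕ) : IsSupported (induce G S) :=
  fun u v h => (hG u v h.1).imp (⟨·, h.2.1⟩) (⟨·, h.2.1⟩)

theorem verts_induce (G : BGraph) (S : Set ℕ) : verts (induce G S) = verts G ∩ S :=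
  (Set.union_inter_distrib_right ..).symm

theorem IsSupported.induce_inter_verts (hG : IsSupported G) (S : Set ℕ) :
    BCE.induce G (S ∩ verts G) = BCE.induce G S := by
  ext u v
  · simp only [BCE.induce, verts, Set.mem_inter_iff, Set.mem_union]
    tauto
  · simp only [BCE.induce, verts, Set.mem_inter_iff, Set.mem_union]
    tauto
  · have hu := hG u v
    have hv := hG.right_mem (u := u) (v := v)
    simp only [BCE.induce, Set.mem_inter_iff]
    tauto

theorem IsBicliqueUnion.induce (hG : IsBicliqueUnion G) (S : Set ℕ) :
    IsBicliqueUnion (induce G S) :=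
  fun a b c d hab hbc hcd => ⟨hG a b c d hab.1 hbc.1 hcd.1, hab.2.1, hcd.2.2⟩

theorem IsBicliqueOn.isBicliqueUnion_induce (hS : IsBicliqueOn G S) (hG : Bipartite G) :
    IsBicliqueUnion (induce G S) := by
  rintro a b c d ⟨hab, ha, -⟩ ⟨hbc, -, -⟩ ⟨hcd, -, hd⟩
  have hAB := Set.disjoint_left.1 hG.1
  have hbc' := hG.2 b c hbc
  have hcd' := hG.2 c d hcd
  refine ⟨?_, ha, hd⟩
  rcases hG.2 a b hab with ⟨haA, hbB⟩ | ⟨haB, hbA⟩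
  · exact hS a ⟨ha, haA⟩ d ⟨hd, by grind⟩
  · exact G.symm d a (hS d ⟨hd, by grind⟩ a ⟨ha, haB⟩)

/-- The vertex of the graph before the operation `op` that a vertex of the graph after `op` comes
from: the copy made by a splitting comes from the split vertex. -/
def Op.origin : Op → ℕ → ℕ
  | .split v v' _ _, x => if x = v' then v else x
  | _, x => x

theorem OpStep.origin_of_mem_verts (hs : OpStep sA sB op G G') (hu : u ∈ verts G) :
    op.origin u = u := by
  cases hs with
  | del | add => rfl
  | split _ hfresh => exact if_neg (by rintro rfl; exact hfresh hu)

theorem OpStep.preimage_origin_sides (hs : OpStep sA sB op G G') :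
    G'.A = op.origin ⁻¹' G.A ∧ G'.B = op.origin ⁻¹' G.B := by
  cases hs with
  | del _ hA hB | add _ _ _ hA hB => exact ⟨hA, hB⟩
  | split hside hfresh _ hA hB =>
    simp only [verts, Set.mem_union, not_or] at hfresh
    constructor <;> ext x <;> simp only [Op.origin, Set.mem_preimage] <;> grind

theorem OpStep.verts_eq (hs : OpStep sA sB op G G') : verts G' = op.origin ⁻¹' verts G := by
  simp only [verts, hs.preimage_origin_sides, Set.preimage_union]

theorem OpStep.verts_subset (hs : OpStep sA sB op G G') : verts G ⊆ verts G' := fun u hu => by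
  rwa [hs.verts_eq, Set.mem_preimage, hs.origin_of_mem_verts hu]

theorem OpStep.isSupported (hs : OpStep sA sB op G G') (hG : IsSupported G) :
    IsSupported G' := by
  intro x w hxw
  rw [hs.verts_eq]
  have hmem (h : x ∈ verts G) : x ∈ op.origin ⁻¹' verts G := by
    rwa [Set.mem_preimage, hs.origin_of_mem_verts h]
  cases hs with
  | del _ _ _ hadj => exact hmem (hG x w ((hadj x w).1 hxw).1)
  | @add _ _ u v hu hv _ _ _ hadj =>
    rcases (hadj x w).1 hxw with h | ⟨rfl, -⟩ | ⟨rfl, -⟩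
    exacts [hmem (hG x w h), hmem (.inl hu), hmem (.inr hv)]
  | @split _ _ v v' N₁ N₂ hside _ hcover _ _ hadj =>
    have hv : v ∈ verts G := hside.imp And.left And.left
    have hN : ∀ z ∈ N₁ ∪ N₂, z ∈ verts G := fun z hz => hG.right_mem (hcover ▸ hz : z ∈ nbhd G v)
    rcases (hadj x w).1 hxw with ⟨h, -, -⟩ | ⟨rfl, -⟩ | ⟨-, h⟩ | ⟨rfl, -⟩ | ⟨-, h⟩
    · exact hmem (hG x w h)
    · exact hmem hv
    · exact hmem (hN x (.inl h))
    · simpa [Op.origin] using hv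
    · exact hmem (hN x (.inr h))

theorem ApplySeq.verts_subset (hL : ApplySeq sA sB L G G') : verts G ⊆ verts G' := by
  induction L generalizing G with
  | nil => exact hL ▸ subset_rfl
  | cons op L ih =>
    obtain ⟨G₁, hs, hL⟩ := hL
    exact hs.verts_subset.trans (ih hL)

theorem ApplySeq.isSupported (hL : ApplySeq sA sB L G G') (hG : IsSupported G) :
    IsSupported G' := by
  induction L generalizing G with
  | nil => exact hL ▸ hG
  | cons op L ih =>
    obtain ⟨G₁, hs, hL⟩ := hL
    exact ih hL (hs.isSupported hG)

theorem Solves.cons (hs : OpStep sA sB op G G') (hL : Solves sA sB L G') :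
    Solves sA sB (op :: L) G :=
  let ⟨K, hseq, hK⟩ := hL
  ⟨K, ⟨G', hs, hseq⟩, hK⟩

section Restriction

/-- The operation `op` modifies the subgraph induced by `S`: it edits an edge inside `S` or splits
a vertex of `S`. -/
def Op.ActsWithin (S : Set ℕ) : Op → Prop
  | .del u v | .add u v => u ∈ S ∧ v ∈ S
  | .split v _ _ _ => v ∈ S

theorem Op.preimage_origin_split_of_mem {v v' : ℕ} {N₁ N₂ : Set ℕ} (hv : v ∈ S) :
    (Op.split v v' N₁ N₂).origin ⁻¹' S = insert v' S := by
  ext x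
  simp only [Op.origin, Set.mem_preimage, Set.mem_insert_iff]
  grind

theorem Op.preimage_origin_split_of_notMem {v v' : ℕ} {N₁ N₂ : Set ℕ} (hv : v ∉ S) :
    (Op.split v v' N₁ N₂).origin ⁻¹' S = S \ {v'} := by
  ext x
  simp only [Op.origin, Set.mem_preimage, Set.mem_sdiff, Set.mem_singleton_iff]
  grind

theorem Op.origin_eq_self_of_not_actsWithin (hop : ¬ op.ActsWithin S) (hu : op.origin u ∈ S) :
    op.origin u = u := by
  cases op with
  | del | add => rfl
  | split v v' => exact if_neg fun h => hop (by rwa [Op.origin, if_pos h] at hu)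

theorem OpStep.preimage_origin_inter_of_not_actsWithin (hs : OpStep sA sB op G G')
    (hop : ¬ op.ActsWithin S) {C : Set ℕ} (hC : C ⊆ verts G) :
    op.origin ⁻¹' C ∩ op.origin ⁻¹' S = C ∩ S := by
  ext u
  constructor
  · rintro ⟨huC, huS⟩
    have hu := Op.origin_eq_self_of_not_actsWithin hop huS
    exact ⟨hu ▸ huC, hu ▸ huS⟩
  · rintro ⟨huC, huS⟩
    simpa [hs.origin_of_mem_verts (hC huC)] using ⟨huC, huS⟩

theorem OpStep.induce_eq_of_not_actsWithin (hs : OpStep sA sB op G G') (hG : IsSupported G)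
    (hop : ¬ op.ActsWithin S) : induce G' (op.origin ⁻¹' S) = induce G S := by
  obtain ⟨hA, hB⟩ := hs.preimage_origin_sides
  refine BGraph.ext ?_ ?_ ?_
  · simpa only [induce, hA] using
      hs.preimage_origin_inter_of_not_actsWithin hop Set.subset_union_left
  · simpa only [induce, hB] using
      hs.preimage_origin_inter_of_not_actsWithin hop Set.subset_union_right
  ext x w
  cases hs with
  | @del _ _ u v _ _ _ hadj | @add _ _ u v _ _ _ _ _ hadj =>
    have huv : ¬ (u ∈ S ∧ v ∈ S) := hop
    change G'.Adj x w ∧ x ∈ S ∧ w ∈ S ↔ G.Adj x w ∧ x ∈ S ∧ w ∈ S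
    grind
  | @split _ _ v v' N₁ N₂ _ hfresh _ _ _ hadj =>
    have hv : v ∉ S := hop
    have hl : ¬ G.Adj v' w := fun h => hfresh (hG v' w h)
    have hr : ¬ G.Adj x v' := fun h => hfresh (hG.right_mem h)
    rw [Op.preimage_origin_split_of_notMem hv]
    simp only [induce, hadj]
    grind

theorem OpStep.exists_induce_of_actsWithin (hs : OpStep sA sB op G G') (hG : IsSupported G)
    (hop : op.ActsWithin S) :
    ∃ op', OpStep sA sB op' (induce G S) (induce G' (op.origin ⁻¹' S)) := by
  cases hs with
  | @del _ _ u v huv hA hB hadj =>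
    refine ⟨.del u v, .del ⟨huv, hop⟩ (by simp only [induce, hA]; rfl)
      (by simp only [induce, hB]; rfl) fun x w => ?_⟩
    simp only [induce, hadj, Op.origin, Set.mem_preimage]
    tauto
  | @add _ _ u v hu hv huv hA hB hadj =>
    refine ⟨.add u v, .add ⟨hu, hop.1⟩ ⟨hv, hop.2⟩ (huv ·.1) (by simp only [induce, hA]; rfl)
      (by simp only [induce, hB]; rfl) fun x w => ?_⟩
    simp only [induce, hadj, Op.origin, Set.mem_preimage]
    grind [Op.ActsWithin]
  | @split _ _ v v' N₁ N₂ hside hfresh hcover hA hB hadj =>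
    have hv : v ∈ S := hop
    have hv' : v' ∉ G.A ∧ v' ∉ G.B := not_or.1 hfresh
    have hl (w : ℕ) : ¬ G.Adj v' w := fun h => hfresh (hG v' w h)
    have hr (w : ℕ) : ¬ G.Adj w v' := fun h => hfresh (hG.right_mem h)
    have hN (x : ℕ) : x ∈ N₁ ∨ x ∈ N₂ ↔ G.Adj v x := Set.ext_iff.1 hcover x
    rw [Op.preimage_origin_split_of_mem hv]
    refine ⟨.split v v' (N₁ ∩ S) (N₂ ∩ S), .split
      (hside.imp (fun h => ⟨⟨h.1, hv⟩, h.2⟩) (fun h => ⟨⟨h.1, hv⟩, h.2⟩))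
      (fun h => hfresh (h.imp And.left And.left)) ?_ (fun h => ?_) (fun h => ?_) fun x w => ?_⟩
    · rw [← Set.union_inter_distrib_right, hcover]
      ext x
      exact ⟨fun h => ⟨h.1, hv, h.2⟩, fun h => ⟨h.1, h.2.2⟩⟩
    · simp [induce, hA h.1, Set.insert_inter_distrib, Set.inter_insert_of_notMem hv'.2]
    · simp [induce, hB h.1, Set.insert_inter_distrib, Set.inter_insert_of_notMem hv'.1]
    · simp only [induce, hadj, Set.mem_inter_iff, Set.mem_insert_iff]
      grind

theorem OpStep.adj_iff_of_notMem (hs : OpStep sA sB op G G') (hop : op.ActsWithin S)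
    (hu : u ∈ verts G) (hv : v ∈ verts G) (huS : u ∉ S) (hvS : v ∉ S) :
    G'.Adj u v ↔ G.Adj u v := by
  cases hs with
  | del _ _ _ hadj | add _ _ _ _ _ hadj =>
    obtain ⟨h₁, h₂⟩ := hop
    grind
  | @split _ _ w w' _ _ _ hfresh _ _ _ hadj =>
    have hw : w ∈ S := hop
    rw [hadj]
    grind

theorem OpStep.exists_adj_iff_of_notMem (hs : OpStep sA sB op G G') (hG : IsSupported G)
    (hop : op.ActsWithin S) (hu : u ∈ verts G) (huS : u ∉ S) :
    (∃ z ∈ op.origin ⁻¹' S, G'.Adj u z) ↔ ∃ z ∈ S, G.Adj u z := by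
  have hmem {z : ℕ} (h : G.Adj u z) : z ∈ op.origin ⁻¹' S ↔ z ∈ S := by
    rw [Set.mem_preimage, hs.origin_of_mem_verts (hG.right_mem h)]
  cases hs with
  | @del _ _ v w _ _ _ hadj | @add _ _ v w _ _ _ _ _ hadj =>
    refine exists_congr fun z => and_congr_right fun _ => ?_
    obtain ⟨hv, hw⟩ : v ∈ S ∧ w ∈ S := hop
    grind
  | @split _ _ v v' N₁ N₂ _ hfresh hcover _ _ hadj =>
    have hv : v ∈ S := hop
    have huv : u ≠ v := by rintro rfl; exact huS hv
    have huv' : u ≠ v' := by rintro rfl; exact hfresh hu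
    have hadj_v : u ∈ N₁ ∪ N₂ → G.Adj u v := fun h => G.symm v u (hcover ▸ h : u ∈ nbhd G v)
    simp only [hadj, huv, huv', ne_eq, not_false_eq_true, true_and, false_and, false_or]
    constructor
    · rintro ⟨z, hz, ⟨h, -⟩ | ⟨-, h⟩ | ⟨-, h⟩⟩
      exacts [⟨z, (hmem h).1 hz, h⟩, ⟨v, hv, hadj_v (.inl h)⟩, ⟨v, hv, hadj_v (.inr h)⟩]
    · rintro ⟨z, hz, h⟩
      by_cases hzv : z = v
      · subst hzv
        have huN : u ∈ N₁ ∪ N₂ := hcover ▸ G.symm u z h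
        obtain h₁ | h₂ := huN
        · exact ⟨z, (hmem h).2 hz, by simp [h₁]⟩
        · exact ⟨v', by simpa [Op.origin] using hv, by simp [h₂]⟩
      · exact ⟨z, (hmem h).2 hz, .inl ⟨h, hzv⟩⟩

/-- A walk `a - x - y` outside `S` whose end `y`, but not its start `a`, has a neighbour in `S`.
It obstructs being a union of bicliques, and operations within `S` cannot destroy it. -/
def HasTail (G : BGraph) (S : Set ℕ) : Prop :=
  ∃ a ∉ S, ∃ x ∉ S, ∃ y ∉ S, G.Adj a x ∧ G.Adj x y ∧ (∃ z ∈ S, G.Adj y z) ∧ ¬ ∃ z ∈ S, G.Adj a z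

theorem HasTail.not_isBicliqueUnion (h : HasTail G S) : ¬ IsBicliqueUnion G := by
  obtain ⟨a, -, x, -, y, -, hax, hxy, ⟨z, hz, hyz⟩, ha⟩ := h
  exact fun hG => ha ⟨z, hz, hG a x y z hax hxy hyz⟩

theorem HasTail.of_opStep_actsWithin (h : HasTail G S) (hs : OpStep sA sB op G G')
    (hG : IsSupported G) (hop : op.ActsWithin S) : HasTail G' (op.origin ⁻¹' S) := by
  obtain ⟨a, ha, x, hx, y, hy, hax, hxy, hyS, haS⟩ := h
  have haV := hG a x hax
  have hxV := hG x y hxy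
  have hyV := hG.right_mem hxy
  have hmem {u : ℕ} (hu : u ∈ verts G) (huS : u ∉ S) : u ∉ op.origin ⁻¹' S := by
    rwa [Set.mem_preimage, hs.origin_of_mem_verts hu]
  exact ⟨a, hmem haV ha, x, hmem hxV hx, y, hmem hyV hy,
    (hs.adj_iff_of_notMem hop haV hxV ha hx).2 hax, (hs.adj_iff_of_notMem hop hxV hyV hx hy).2 hxy,
    (hs.exists_adj_iff_of_notMem hG hop hyV hy).2 hyS,
    (hs.exists_adj_iff_of_notMem hG hop haV ha).not.2 haS⟩

theorem Solves.restrict (hL : Solves sA sB L G) (hG : IsSupported G) (S : Set ℕ) :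
    ∃ L', Solves sA sB L' (induce G S) ∧ L'.length ≤ L.length := by
  induction L generalizing G S with
  | nil =>
    obtain ⟨_, rfl, hu⟩ := hL
    exact ⟨[], ⟨_, rfl, hu.induce S⟩, le_rfl⟩
  | cons op L ih =>
    obtain ⟨K, ⟨G', hs, hseq⟩, hK⟩ := hL
    obtain ⟨L', hL', hlen⟩ := ih ⟨K, hseq, hK⟩ (hs.isSupported hG) (op.origin ⁻¹' S)
    by_cases hop : op.ActsWithin S
    · obtain ⟨op', hs'⟩ := hs.exists_induce_of_actsWithin hG hop
      exact ⟨op' :: L', hL'.cons hs', Nat.succ_le_succ hlen⟩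
    · exact ⟨L', hs.induce_eq_of_not_actsWithin hG hop ▸ hL', Nat.le_succ_of_le hlen⟩

/- The first operation that does not act within `S` is saved; there is one, since the operations
before it preserve the tail. -/
theorem Solves.restrict_of_hasTail (hL : Solves sA sB L G) (hG : IsSupported G)
    (hS : HasTail G S) : ∃ L', Solves sA sB L' (induce G S) ∧ L'.length < L.length := by
  induction L generalizing G S with
  | nil =>
    obtain ⟨_, rfl, hu⟩ := hL
    exact absurd hu hS.not_isBicliqueUnion
  | cons op L ih =>
    obtain ⟨K, ⟨G', hs, hseq⟩, hK⟩ := hL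
    have hL : Solves sA sB L G' := ⟨K, hseq, hK⟩
    have hG' := hs.isSupported hG
    by_cases hop : op.ActsWithin S
    · obtain ⟨L', hL', hlen⟩ := ih hL hG' (hS.of_opStep_actsWithin hs hG hop)
      obtain ⟨op', hs'⟩ := hs.exists_induce_of_actsWithin hG hop
      exact ⟨op' :: L', hL'.cons hs', Nat.succ_lt_succ hlen⟩
    · obtain ⟨L', hL', hlen⟩ := hL.restrict hG' (op.origin ⁻¹' S)
      exact ⟨L', hs.induce_eq_of_not_actsWithin hG hop ▸ hL', Nat.lt_succ_of_le hlen⟩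

end Restriction

section DisjointUnion

/-- The graph obtained from `G` by renaming every vertex `u` to `σ.symm u`. -/
def BGraph.comap (σ : Equiv.Perm ℕ) (G : BGraph) : BGraph where
  A := σ ⁻¹' G.A
  B := σ ⁻¹' G.B
  finA := G.finA.preimage σ.injective.injOn
  finB := G.finB.preimage σ.injective.injOn
  Adj u v := G.Adj (σ u) (σ v)
  symm u v := G.symm (σ u) (σ v)

/-- The operation `op` after renaming every vertex `u` to `σ.symm u`. -/
def Op.comap (σ : Equiv.Perm ℕ) : Op → Op
  | .del u v => .del (σ.symm u) (σ.symm v)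
  | .add u v => .add (σ.symm u) (σ.symm v)
  | .split v v' N₁ N₂ => .split (σ.symm v) (σ.symm v') (σ ⁻¹' N₁) (σ ⁻¹' N₂)

theorem OpStep.comap (hs : OpStep sA sB op G G') (σ : Equiv.Perm ℕ) :
    OpStep sA sB (op.comap σ) (G.comap σ) (G'.comap σ) := by
  cases hs with
  | del h hA hB hadj =>
    exact .del (by simpa [BGraph.comap]) (by simp [BGraph.comap, hA]) (by simp [BGraph.comap, hB])
      (by simp [BGraph.comap, hadj, Equiv.eq_symm_apply])
  | add hu hv h hA hB hadj =>
    exact .add (by simpa [BGraph.comap]) (by simpa [BGraph.comap]) (by simpa [BGraph.comap])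
      (by simp [BGraph.comap, hA]) (by simp [BGraph.comap, hB])
      (by simp [BGraph.comap, hadj, Equiv.eq_symm_apply])
  | @split _ _ v v' N₁ N₂ hside hfresh hcover hA hB hadj =>
    have hinsert (C : Set ℕ) : σ ⁻¹' insert v' C = insert (σ.symm v') (σ ⁻¹' C) := by
      ext x
      simp [Equiv.eq_symm_apply]
    refine .split (by simpa [BGraph.comap]) (by simpa [BGraph.comap, verts] using hfresh) ?_ ?_ ?_
      (by simp [BGraph.comap, hadj, Equiv.eq_symm_apply])
    · rw [← Set.preimage_union, hcover]
      simp [nbhd, BGraph.comap]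
    · intro h
      simp [BGraph.comap, hA (by simpa [BGraph.comap] using h), hinsert]
    · intro h
      simp [BGraph.comap, hB (by simpa [BGraph.comap] using h), hinsert]

theorem ApplySeq.comap (hL : ApplySeq sA sB L G G') (σ : Equiv.Perm ℕ) :
    ApplySeq sA sB (L.map (Op.comap σ)) (G.comap σ) (G'.comap σ) := by
  induction L generalizing G with
  | nil => exact congrArg (BGraph.comap σ) hL
  | cons op L ih =>
    obtain ⟨G₁, hs, hL⟩ := hL
    exact ⟨G₁.comap σ, hs.comap σ, ih hL⟩

theorem IsBicliqueUnion.comap (hG : IsBicliqueUnion G) (σ : Equiv.Perm ℕ) :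
    IsBicliqueUnion (G.comap σ) :=
  fun a b c d => hG (σ a) (σ b) (σ c) (σ d)

theorem IsSupported.comap_eq_self (hG : IsSupported G) {σ : Equiv.Perm ℕ}
    (hσ : ∀ u ∈ verts G, σ u = u) : G.comap σ = G := by
  have hσ' (u : ℕ) (hu : σ u ∈ verts G) : σ u = u := σ.injective (hσ _ hu)
  have hl := hG
  have hr := fun u v => hG.right_mem (u := u) (v := v)
  simp only [IsSupported, verts, Set.mem_union] at hl hr hσ hσ'
  ext u v <;> simp only [BGraph.comap, Set.mem_preimage] <;> grind

theorem exists_perm_avoiding {V F : Set ℕ} (hV : V.Finite) (hF : F.Finite) :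
    ∃ σ : Equiv.Perm ℕ, (∀ n ∈ V \ F, σ n = n) ∧ ∀ n ∈ F, σ n ∉ V := by
  classical
  obtain ⟨M, hM⟩ := (hV.union hF).bddAbove
  have hVM (n : ℕ) (hn : n ∈ V) : n ≤ M := hM (.inl hn)
  have hFM (n : ℕ) (hn : n ∈ F) : n ≤ M := hM (.inr hn)
  let swap (n : ℕ) : ℕ :=
    if n ∈ F then n + (M + 1) else if M < n ∧ n - (M + 1) ∈ F then n - (M + 1) else n
  have hswap : Function.Involutive swap := fun n => by grind
  refine ⟨hswap.toPerm, fun n hn => ?_, fun n hn => ?_⟩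
  · change swap n = n
    grind
  · change swap n ∉ V
    grind

/-- The union of two graphs, intended for graphs without common vertices. -/
def BGraph.union (H R : BGraph) : BGraph where
  A := H.A ∪ R.A
  B := H.B ∪ R.B
  finA := H.finA.union R.finA
  finB := H.finB.union R.finB
  Adj u v := H.Adj u v ∨ R.Adj u v
  symm u v := Or.imp (H.symm u v) (R.symm u v)

theorem IsBicliqueUnion.union (hH : IsBicliqueUnion H) (hR : IsBicliqueUnion R)
    (hHs : IsSupported H) (hRs : IsSupported R) (hdisj : Disjoint (verts H) (verts R)) :
    IsBicliqueUnion (H.union R) := by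
  have hHR {u v w : ℕ} (h : H.Adj u v) : ¬ R.Adj v w := fun h' =>
    Set.disjoint_left.1 hdisj (hHs.right_mem h) (hRs v w h')
  have hRH {u v w : ℕ} (h : R.Adj u v) : ¬ H.Adj v w := fun h' =>
    Set.disjoint_left.1 hdisj (hHs v w h') (hRs.right_mem h)
  rintro a b c d (hab | hab) (hbc | hbc) (hcd | hcd)
  · exact .inl (hH a b c d hab hbc hcd)
  · exact absurd hcd (hHR hbc)
  · exact absurd hbc (hHR hab)
  · exact absurd hbc (hHR hab)
  · exact absurd hbc (hRH hab)
  · exact absurd hbc (hRH hab)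
  · exact absurd hcd (hRH hbc)
  · exact .inr (hR a b c d hab hbc hcd)

theorem OpStep.union (hs : OpStep sA sB op H H') (hH : IsSupported H) (hR : IsSupported R)
    (hdisj : Disjoint (verts H') (verts R)) :
    OpStep sA sB op (H.union R) (H'.union R) := by
  have hHR {u : ℕ} (hu : u ∈ verts H) : u ∉ verts R :=
    Set.disjoint_left.1 (hdisj.mono_left hs.verts_subset) hu
  have hverts := hs.verts_eq
  cases hs with
  | @del _ _ u v h hA hB hadj =>
    have hu (w : ℕ) : ¬ R.Adj u w := fun h' => hHR (hH u v h) (hR u w h')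
    have hv (w : ℕ) : ¬ R.Adj v w := fun h' => hHR (hH.right_mem h) (hR v w h')
    refine .del (.inl h) (by simp [BGraph.union, hA]) (by simp [BGraph.union, hB]) fun x w => ?_
    simp only [BGraph.union, hadj]
    grind
  | @add _ _ u v hu hv h hA hB hadj =>
    have huv : ¬ R.Adj u v := fun h' => hHR (.inl hu) (hR u v h')
    refine .add (.inl hu) (.inl hv) (not_or.2 ⟨h, huv⟩) (by simp [BGraph.union, hA])
      (by simp [BGraph.union, hB]) fun x w => ?_
    simp only [BGraph.union, hadj]
    tauto
  | @split _ _ v v' N₁ N₂ hside hfresh hcover hA hB hadj =>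
    have hvH : v ∈ verts H := hside.imp And.left And.left
    have hv : v ∉ verts R := hHR hvH
    have hv' : v' ∉ verts R := Set.disjoint_left.1 hdisj (by simpa [hverts, Op.origin] using hvH)
    have hl (w : ℕ) : ¬ R.Adj v w := fun h => hv (hR v w h)
    have hr (w : ℕ) : ¬ R.Adj w v := fun h => hv (hR.right_mem h)
    refine .split (hside.imp (.imp_left .inl) (.imp_left .inl)) ?_ ?_ (fun h => ?_) (fun h => ?_)
      fun x w => ?_
    · simp only [verts, Set.mem_union, BGraph.union] at hfresh hv' ⊢
      tauto
    · simpa [nbhd, BGraph.union, hl] using hcover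
    · simp [BGraph.union, hA (h.resolve_right fun h' => hv (.inl h')), Set.insert_union]
    · simp [BGraph.union, hB (h.resolve_right fun h' => hv (.inr h')), Set.insert_union]
    · simp only [BGraph.union, hadj]
      grind

theorem ApplySeq.union (hL : ApplySeq sA sB L H H') (hH : IsSupported H) (hR : IsSupported R)
    (hdisj : Disjoint (verts H') (verts R)) :
    ApplySeq sA sB L (H.union R) (H'.union R) := by
  induction L generalizing H with
  | nil => exact congrArg (BGraph.union · R) hL
  | cons op L ih =>
    obtain ⟨H₁, hs, hL⟩ := hL
    exact ⟨H₁.union R, hs.union hH hR (hdisj.mono_left hL.verts_subset), ih hL (hs.isSupported hH)⟩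

theorem Solves.union (hL : Solves sA sB L H) (hH : IsSupported H) (hR : IsSupported R)
    (hRu : IsBicliqueUnion R) (hdisj : Disjoint (verts H) (verts R)) :
    ∃ L', L'.length = L.length ∧ Solves sA sB L' (H.union R) := by
  obtain ⟨K, hseq, hK⟩ := hL
  obtain ⟨σ, hσH, hσR⟩ := exists_perm_avoiding (finite_verts K) (finite_verts R)
  have hself : H.comap σ = H := hH.comap_eq_self fun u hu =>
    hσH u ⟨hseq.verts_subset hu, Set.disjoint_left.1 hdisj hu⟩
  have hseq' := hself ▸ hseq.comap σ
  have hdisj' : Disjoint (verts (K.comap σ)) (verts R) :=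
    Set.disjoint_right.2 fun u hu => hσR u hu
  exact ⟨_, List.length_map (Op.comap σ), _, hseq'.union hH hR hdisj',
    (hK.comap σ).union hRu (hseq'.isSupported hH) hR hdisj'⟩

end DisjointUnion

section EditNumber

/-- The minimum length of a sequence of operations turning `G` into a disjoint union of bicliques,
where `sA` and `sB` tell on which sides vertices may be split. By definition `bcevs G` is
`editNumber true true G` and `bceovs G` is `editNumber true false G`. -/
noncomputable def editNumber (sA sB : Bool) (G : BGraph) : ℕ :=
  sInf {n | ∃ L, L.length = n ∧ Solves sA sB L G}

theorem Solves.editNumber_le (hL : Solves sA sB L G) : editNumber sA sB G ≤ L.length :=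
  Nat.sInf_le ⟨L, rfl, hL⟩

/-- The graph `G` without the edge `uv`. -/
def BGraph.deleteEdge (G : BGraph) (u v : ℕ) : BGraph where
  A := G.A
  B := G.B
  finA := G.finA
  finB := G.finB
  Adj x w := G.Adj x w ∧ ¬ ((x = u ∧ w = v) ∨ (x = v ∧ w = u))
  symm x w h := ⟨G.symm x w h.1, fun h' => h.2 (by tauto)⟩

theorem opStep_deleteEdge (h : G.Adj u v) :
    OpStep sA sB (.del u v) G (G.deleteEdge u v) :=
  .del h rfl rfl fun _ _ => Iff.rfl

theorem IsSupported.exists_solves (hG : IsSupported G) : ∃ L, Solves sA sB L G := by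
  induction hn : {p : ℕ × ℕ | G.Adj p.1 p.2}.ncard using Nat.strong_induction_on
    generalizing G with
  | _ n ih =>
    by_cases hE : ∃ u v, G.Adj u v
    · obtain ⟨u, v, huv⟩ := hE
      have hs : OpStep sA sB (.del u v) G (G.deleteEdge u v) := opStep_deleteEdge huv
      have hfin : {p : ℕ × ℕ | G.Adj p.1 p.2}.Finite :=
        ((finite_verts G).prod (finite_verts G)).subset fun p hp =>
          ⟨hG p.1 p.2 hp, hG.right_mem hp⟩
      have hlt : {p : ℕ × ℕ | (G.deleteEdge u v).Adj p.1 p.2}.ncard < n := hn ▸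
        Set.ncard_lt_ncard ⟨fun p hp => hp.1,
          fun hsub => (hsub (show (u, v) ∈ _ from huv)).2 (.inl ⟨rfl, rfl⟩)⟩ hfin
      obtain ⟨L, hL⟩ := ih _ hlt (hs.isSupported hG) rfl
      exact ⟨_, hL.cons hs⟩
    · exact ⟨[], G, rfl, fun a b _ _ hab => absurd ⟨a, b, hab⟩ hE⟩

theorem IsSupported.exists_solves_length_eq (hG : IsSupported G) :
    ∃ L, L.length = editNumber sA sB G ∧ Solves sA sB L G := by
  obtain ⟨L, hL⟩ := hG.exists_solves (sA := sA) (sB := sB)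
  exact Nat.sInf_mem (s := {n | ∃ L, L.length = n ∧ Solves sA sB L G}) ⟨L.length, L, rfl, hL⟩

theorem IsSupported.editNumber_le_of_opStep (hG : IsSupported G) (hs : OpStep sA sB op G G') :
    editNumber sA sB G ≤ 1 + editNumber sA sB G' := by
  obtain ⟨L, hlen, hL⟩ := (hs.isSupported hG).exists_solves_length_eq
  rw [← hlen, add_comm]
  exact (hL.cons hs).editNumber_le

theorem IsSupported.editNumber_union_le (hH : IsSupported H) (hR : IsSupported R)
    (hRu : IsBicliqueUnion R) (hdisj : Disjoint (verts H) (verts R)) :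
    editNumber sA sB (H.union R) ≤ editNumber sA sB H := by
  obtain ⟨L, hlen, hL⟩ := hH.exists_solves_length_eq
  obtain ⟨L', hlen', hL'⟩ := hL.union hH hR hRu hdisj
  exact hL'.editNumber_le.trans_eq (hlen'.trans hlen)

theorem HasTail.editNumber_induce_lt (hS : HasTail G S) (hG : IsSupported G) :
    editNumber sA sB (induce G S) < editNumber sA sB G := by
  obtain ⟨L, hlen, hL⟩ := hG.exists_solves_length_eq
  obtain ⟨L', hL', hlt⟩ := hL.restrict_of_hasTail hG hS
  exact hL'.editNumber_le.trans_lt (hlen ▸ hlt)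

theorem deleteEdge_eq_union_induce (hu : u ∉ S) (hv : v ∈ S)
    (hcut : ∀ x ∉ S, ∀ w ∈ S, G.Adj x w → x = u ∧ w = v) :
    G.deleteEdge u v = (induce G S).union (induce G Sᶜ) := by
  ext x w
  · simp [BGraph.deleteEdge, BGraph.union, induce]
  · simp [BGraph.deleteEdge, BGraph.union, induce]
  · have hsymm := G.symm
    simp only [BGraph.deleteEdge, BGraph.union, induce, Set.mem_compl_iff]
    grind

theorem IsSupported.editNumber_le_of_cut_edge (hG : IsSupported G) (huv : G.Adj u v)
    (hu : u ∉ S) (hv : v ∈ S) (hcut : ∀ x ∉ S, ∀ w ∈ S, G.Adj x w → x = u ∧ w = v)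
    (hS : IsBicliqueUnion (BCE.induce G Sᶜ)) :
    editNumber sA sB G ≤ 1 + editNumber sA sB (BCE.induce G S) := by
  have hdisj : Disjoint (verts (BCE.induce G S)) (verts (BCE.induce G Sᶜ)) := by
    simp only [verts_induce]
    exact disjoint_compl_right.mono Set.inter_subset_right Set.inter_subset_right
  calc editNumber sA sB G
      ≤ 1 + editNumber sA sB (G.deleteEdge u v) :=
        hG.editNumber_le_of_opStep (opStep_deleteEdge huv)
    _ = 1 + editNumber sA sB ((BCE.induce G S).union (BCE.induce G Sᶜ)) := by
        rw [deleteEdge_eq_union_induce hu hv hcut]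
    _ ≤ 1 + editNumber sA sB (BCE.induce G S) :=
        Nat.add_le_add_left ((hG.induce S).editNumber_union_le (hG.induce Sᶜ) hS hdisj) 1

end EditNumber

end

theorem tree_cut_single_general (sA sB : Bool) {G : BGraph} (hG : IsSupported G) {y : ℕ}
    {X Y : Set ℕ} (hpart : X ∪ Y = verts G \ {y}) (hdisj : Disjoint X Y)
    (hsep : ∀ u ∈ X, ∀ v ∈ Y, ¬ G.Adj u v)
    (hX : IsBicliqueUnion (induce G (insert y X)))
    (hwalk : ∃ a ∈ X, ∃ x, G.Adj y x ∧ G.Adj x a)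
    (hNy : (nbhd G y ∩ Y).ncard = 1) :
    editNumber sA sB G = 1 + editNumber sA sB (induce G Y) := by
  obtain ⟨z, hz⟩ := Set.ncard_eq_one.1 hNy
  obtain ⟨a, ha, x, hyx, hxa⟩ := hwalk
  obtain ⟨hyz, hzY⟩ : z ∈ nbhd G y ∩ Y := hz ▸ rfl
  have hyY : y ∉ Y := fun h => (hpart ▸ .inr h : y ∈ verts G \ {y}).2 rfl
  have hmem (u : ℕ) (hu : u ∈ verts G) (huY : u ∉ Y) : u ∈ insert y X := by
    have := Set.ext_iff.1 hpart u
    grind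
  have hcut (u : ℕ) (hu : u ∉ Y) (v : ℕ) (hv : v ∈ Y) (huv : G.Adj u v) : u = y ∧ v = z := by
    obtain rfl | huX := hmem u (hG u v huv) hu
    · exact ⟨rfl, (hz ▸ ⟨huv, hv⟩ : v ∈ ({z} : Set ℕ))⟩
    · exact absurd huv (hsep u huX v hv)
  have hcompl : Yᶜ ∩ verts G = insert y X ∩ verts G := by
    ext u
    refine ⟨fun h => ⟨hmem u h.2 h.1, h.2⟩, fun h => ⟨?_, h.2⟩⟩
    rcases h.1 with rfl | huX
    exacts [hyY, Set.disjoint_left.1 hdisj huX]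
  have htail : HasTail G Y :=
    ⟨a, Set.disjoint_left.1 hdisj ha, x, fun hx => hsep a ha x hx (G.symm x a hxa), y, hyY,
      G.symm x a hxa, G.symm y x hyx, ⟨z, hzY, hyz⟩, fun ⟨w, hw, haw⟩ => hsep a ha w hw haw⟩
  have hYc : IsBicliqueUnion (induce G Yᶜ) := by
    rwa [← hG.induce_inter_verts, hcompl, hG.induce_inter_verts]
  have hlower : editNumber sA sB (induce G Y) < editNumber sA sB G :=
    htail.editNumber_induce_lt hG
  have hupper : editNumber sA sB G ≤ 1 + editNumber sA sB (induce G Y) :=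
    hG.editNumber_le_of_cut_edge hyz hyY hzY hcut hYc
  omega

/-- Let `T = (A, B, E)` be a tree and `y` a cut vertex
partitioning `V(T) \ {y}` into `X` and `Y` such that the subgraph induced by
`X ∪ {y}` is a biclique, some vertex of `X` is at distance two from `y`, and
`|N(y) ∩ Y| = 1`.  Then `bceovs(T, A) = 1 + bceovs(T[Y], A)` and
`bcevs(T) = 1 + bcevs(T[Y])`. -/
theorem tree_cut_single (G : BGraph) (hbip : Bipartite G) (htree : IsTreeB G)
    (y : ℕ) (hy : y ∈ verts G) (X Y : Set ℕ)
    (hpart : X ∪ Y = verts G \ {y}) (hdisj : Disjoint X Y)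
    (hsep : ∀ u ∈ X, ∀ v ∈ Y, ¬ G.Adj u v)
    (hbic : IsBicliqueOn G (insert y X))
    (hdist2 : ∃ a ∈ X, ∃ x, G.Adj y x ∧ G.Adj x a ∧ ¬ G.Adj y a ∧ a ≠ y)
    (hNy : (nbhd G y ∩ Y).ncard = 1) :
    bceovs G = 1 + bceovs (induce G Y) ∧ bcevs G = 1 + bcevs (induce G Y) := by
  have key (sA sB : Bool) := tree_cut_single_general sA sB hbip.isSupported
    hpart hdisj hsep (hbic.isBicliqueUnion_induce hbip)
    (let ⟨a, ha, x, hyx, hxa, _⟩ := hdist2; ⟨a, ha, x, hyx, hxa⟩) hNy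
  exact ⟨key true false, key true true⟩

end BCE
end
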